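/- For every integer k ≥ 2 there exists a constant μ (depending only on k) such that for all integers r ≥ k and all integers c_{k-1} > c_{k-2} > ... > c_1 > μ, one has f(r, k, ∑_{i=1}^{k-1} C(c_i, i)) = ∑_{i=1}^{k-1} C(c_i, i+1), where C(n,m) denotes the binomial coefficient. -/

import Mathlib

/-- A pair `(𝒜, ℬ)` of families, where `𝒜` consists of `r`-element subsets of `ℕ` and
`ℬ` of `(r-1)`-element subsets of `ℕ`, is `k`-valid if every `A ∈ 𝒜` has at least `k`
subsets of cardinality `r - 1` belonging to `ℬ`. -/
def ValidPair (r k : ℕ) (𝒜 ℬ : Finset (Finset ℕ)) : Prop :=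
  (∀ A ∈ 𝒜, A.card = r) ∧ (∀ B ∈ ℬ, B.card = r - 1) ∧
    ∀ A ∈ 𝒜, k ≤ (ℬ.filter (fun B => B ⊆ A)).card

/-- `f r k b` is the maximum of `|𝒜|` over all `k`-valid pairs `(𝒜, ℬ)` with `|ℬ| = b`. -/
noncomputable def f (r k b : ℕ) : ℕ :=
  sSup {a : ℕ | ∃ 𝒜 ℬ : Finset (Finset ℕ), ValidPair r k 𝒜 ℬ ∧ ℬ.card = b ∧ 𝒜.card = a}


open Finset in
lemma shadow_map_fin {n : ℕ} (𝒜 : Finset (Finset (Fin n))) :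
    Finset.shadow (𝒜.image (fun s => s.map Fin.valEmbedding))
      = (Finset.shadow 𝒜).image (fun s => s.map Fin.valEmbedding) := by
  ext t
  simp only [Finset.mem_shadow_iff, Finset.mem_image]
  constructor
  · rintro ⟨s, ⟨s', hs', rfl⟩, a, ha, rfl⟩
    obtain ⟨a', ha', rfl⟩ := Finset.mem_map.1 ha
    exact ⟨s'.erase a', ⟨s', hs', a', ha', rfl⟩, by rw [Finset.map_erase]⟩
  · rintro ⟨s, ⟨s', hs', a, ha, rfl⟩, rfl⟩
    exact ⟨_, ⟨s', hs', rfl⟩, Fin.valEmbedding a, Finset.mem_map_of_mem _ ha, by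
      rw [Finset.map_erase]⟩

lemma lift_fin (n : ℕ) (𝒜 : Finset (Finset ℕ)) (h : ∀ A ∈ 𝒜, ∀ x ∈ A, x < n) :
    ((Finset.univ.filter (fun s : Finset (Fin n) => s.map Fin.valEmbedding ∈ 𝒜)).image
      (fun s => s.map Fin.valEmbedding)) = 𝒜 := by
  ext A
  simp only [Finset.mem_image, Finset.mem_filter, Finset.mem_univ, true_and]
  constructor
  · rintro ⟨s, hs, rfl⟩; exact hs
  · intro hA
    refine ⟨Finset.univ.filter (fun i : Fin n => (i : ℕ) ∈ A), ?_⟩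
    have : (Finset.univ.filter (fun i : Fin n => (i : ℕ) ∈ A)).map Fin.valEmbedding = A := by
      ext x
      simp only [Finset.mem_map, Finset.mem_filter, Finset.mem_univ, true_and]
      constructor
      · rintro ⟨i, hi, rfl⟩; exact hi
      · intro hx; exact ⟨⟨x, h A hA x hx⟩, hx, rfl⟩
    rw [this]; exact ⟨hA, rfl⟩

lemma kk_nat {k : ℕ} {𝒜 𝒞 : Finset (Finset ℕ)} (hA : ∀ A ∈ 𝒜, A.card = k)
    (hC : Finset.Colex.IsInitSeg 𝒞 k) (hle : 𝒞.card ≤ 𝒜.card) :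
    (Finset.shadow 𝒞).card ≤ (Finset.shadow 𝒜).card := by
  classical
  obtain ⟨n, hn⟩ : ∃ n, ∀ A ∈ 𝒜 ∪ 𝒞, ∀ x ∈ A, x < n := by
    refine ⟨((𝒜 ∪ 𝒞).sup id).sup id + 1, fun A hA x hx => Nat.lt_succ_of_le ?_⟩
    exact Finset.le_sup (f := id) (Finset.mem_sup.2 ⟨A, hA, hx⟩)
  have inj : Function.Injective (fun s : Finset (Fin n) => s.map Fin.valEmbedding) :=
    Finset.map_injective _
  have eA := lift_fin n 𝒜 (fun A h => hn A (Finset.mem_union_left _ h))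
  have eC := lift_fin n 𝒞 (fun A h => hn A (Finset.mem_union_right _ h))
  set 𝒜' := (Finset.univ.filter (fun s : Finset (Fin n) => s.map Fin.valEmbedding ∈ 𝒜)) with h1
  set 𝒞' := (Finset.univ.filter (fun s : Finset (Fin n) => s.map Fin.valEmbedding ∈ 𝒞)) with h2
  have key := Finset.kruskal_katona (𝒜 := 𝒜') (𝒞 := 𝒞') (r := k) ?_ ?_ ?_
  · rw [← eA, ← eC, shadow_map_fin, shadow_map_fin, Finset.card_image_of_injective _ inj,
      Finset.card_image_of_injective _ inj]
    exact key
  · intro s hs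
    have : s.map Fin.valEmbedding ∈ 𝒜 := by simpa [h1] using hs
    simpa using hA _ this
  · rw [← eA, ← eC, Finset.card_image_of_injective _ inj, Finset.card_image_of_injective _ inj]
      at hle
    exact hle
  · refine ⟨?_, ?_⟩
    · intro s hs
      have : s.map Fin.valEmbedding ∈ 𝒞 := by simpa [h2] using hs
      simpa using hC.1 this
    · intro s t hs ht
      have hs : s.map Fin.valEmbedding ∈ 𝒞 := by simpa [h2] using hs
      have : t.map Fin.valEmbedding ∈ 𝒞 := by
        refine hC.2 hs ⟨?_, by simpa using ht.2⟩
        have := (Finset.Colex.toColex_image_lt_toColex_image (f := (Fin.val : Fin n → ℕ))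
          (s := t) (t := s) Fin.val_strictMono).2 ht.1
        simpa [Finset.map_eq_image] using this
      simpa [h2] using this

lemma exists_initSeg_card (k : ℕ) (hk : 1 ≤ k) (a : ℕ) :
    ∃ 𝒞 : Finset (Finset ℕ), Finset.Colex.IsInitSeg 𝒞 k ∧ 𝒞.card = a := by
  classical
  induction a with
  | zero => exact ⟨∅, Finset.Colex.isInitSeg_empty, rfl⟩
  | succ a ih =>
    obtain ⟨𝒞, hC, rfl⟩ := ih
    have hex : ∃ m : ℕ, (ofColex (Finset.orderIsoColex m)).card = k ∧
        ofColex (Finset.orderIsoColex m) ∉ 𝒞 := by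
      obtain ⟨n, hn⟩ : ∃ n, ∀ A ∈ 𝒞, ∀ x ∈ A, x < n := by
        refine ⟨(𝒞.sup id).sup id + 1, fun A hA x hx => Nat.lt_succ_of_le ?_⟩
        exact Finset.le_sup (f := id) (Finset.mem_sup.2 ⟨A, hA, hx⟩)
      refine ⟨Finset.orderIsoColex.symm (toColex (Finset.Ico n (n + k))), ?_, ?_⟩
      · rw [OrderIso.apply_symm_apply]; simp
      · rw [OrderIso.apply_symm_apply]
        intro h
        have := hn _ h n (by simp; omega)
        omega
    obtain ⟨h1, h2⟩ := Nat.find_spec hex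
    have hmin := fun m => Nat.find_min hex (m := m)
    set M := Nat.find hex
    refine ⟨insert (ofColex (Finset.orderIsoColex M)) 𝒞, ⟨?_, ?_⟩, Finset.card_insert_of_notMem h2⟩
    · intro s hs
      rcases Finset.mem_insert.1 hs with rfl | hs
      · exact h1
      · exact hC.1 hs
    · intro s t hs ht
      rcases Finset.mem_insert.1 hs with rfl | hs
      · by_contra hcon
        have hlt : Finset.orderIsoColex.symm (toColex t) < M := by
          have := ht.1
          rw [← Finset.orderIsoColex.lt_iff_lt, OrderIso.apply_symm_apply]
          exact this
        apply hmin _ hlt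
        rw [OrderIso.apply_symm_apply]
        exact ⟨ht.2, fun h => hcon (Finset.mem_insert_of_mem h)⟩
      · exact Finset.mem_insert_of_mem (hC.2 hs ht)

lemma initSeg_powersetCard (k m : ℕ) :
    Finset.Colex.IsInitSeg (Finset.powersetCard k (Finset.range m)) k := by
  refine ⟨fun s hs => (Finset.mem_powersetCard.1 hs).2, fun s t hs ht => ?_⟩
  rw [Finset.mem_powersetCard] at hs ⊢
  refine ⟨fun x hx => ?_, ht.2⟩
  have := Finset.Colex.forall_lt_mono ht.1.le (a := m)
    (fun b hb => Finset.mem_range.1 (hs.1 hb)) x hx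
  exact Finset.mem_range.2 this

lemma shadow_powersetCard (k m : ℕ) (h : k + 1 ≤ m) :
    Finset.powersetCard k (Finset.range m) ⊆
      Finset.shadow (Finset.powersetCard (k+1) (Finset.range m)) := by
  intro t ht
  rw [Finset.mem_powersetCard] at ht
  obtain ⟨a, ha, hat⟩ : ∃ a ∈ Finset.range m, a ∉ t := by
    by_contra hcon
    push Not at hcon
    have := Finset.card_le_card (show Finset.range m ⊆ t from hcon)
    simp at this
    omega
  rw [Finset.mem_shadow_iff_insert_mem]
  refine ⟨a, hat, Finset.mem_powersetCard.2 ⟨Finset.insert_subset ha ht.1, ?_⟩⟩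
  rw [Finset.card_insert_of_notMem hat, ht.2]

/-- cascade family plus one extra set -/
def Cf (c : ℕ → ℕ) : ℕ → Finset (Finset ℕ)
  | 0 => {{0}}
  | (s+1) => Finset.powersetCard (s+2) (Finset.range (c (s+1))) ∪ (Cf c s).image (insert (c (s+1)))

lemma Cf_lt (c : ℕ → ℕ) (s : ℕ) (hc : StrictMonoOn c (Set.Icc 1 s)) (m : ℕ)
    (hm : ∀ i, 1 ≤ i → i ≤ s → c i < m) (hm1 : 0 < m) : ∀ A ∈ Cf c s, ∀ x ∈ A, x < m := by
  induction s with
  | zero => intro A hA x hx; simp [Cf] at hA; subst hA; simp at hx; omega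
  | succ s ih =>
    intro A hA x hx
    simp only [Cf, Finset.mem_union, Finset.mem_image, Finset.mem_powersetCard] at hA
    rcases hA with hA | ⟨B, hB, rfl⟩
    · have := Finset.mem_range.1 (hA.1 hx)
      have := hm (s+1) (by omega) le_rfl
      omega
    · rcases Finset.mem_insert.1 hx with rfl | hx
      · exact hm (s+1) (by omega) le_rfl
      · exact ih (hc.mono (Set.Icc_subset_Icc le_rfl (by omega))) (fun i h h' => hm i h (by omega))
          B hB x hx

lemma c_ge (c : ℕ → ℕ) (s : ℕ) (hc : StrictMonoOn c (Set.Icc 1 s)) (h1 : 2 ≤ c 1) :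
    ∀ i, 1 ≤ i → i ≤ s → i + 1 ≤ c i := by
  intro i hi
  induction i, hi using Nat.le_induction with
  | base => intro _; omega
  | succ i hi ih =>
    intro h
    have := ih (by omega)
    have := hc (a := i) ⟨hi, by omega⟩ (b := i+1) ⟨by omega, h⟩ (by omega)
    omega

lemma Cf_lt' (c : ℕ → ℕ) (s : ℕ) (hc : StrictMonoOn c (Set.Icc 1 (s+1))) (h1 : 2 ≤ c 1) :
    ∀ A ∈ Cf c s, ∀ x ∈ A, x < c (s+1) := by
  apply Cf_lt c s (hc.mono (Set.Icc_subset_Icc le_rfl (by omega)))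
  · intro i h h'
    exact hc ⟨h, by omega⟩ ⟨by omega, le_rfl⟩ (by omega)
  · have := c_ge c (s+1) hc h1 (s+1) (by omega) le_rfl
    omega

lemma Cf_card (c : ℕ → ℕ) (s : ℕ) (hc : StrictMonoOn c (Set.Icc 1 s)) (h1 : 2 ≤ c 1) :
    (Cf c s).card = ∑ i ∈ Finset.Icc 1 s, (c i).choose (i+1) + 1 := by
  induction s with
  | zero => simp [Cf]
  | succ s ih =>
    have hlt := Cf_lt' c s hc h1
    rw [Cf, Finset.card_union_of_disjoint, Finset.card_powersetCard, Finset.card_range,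
      Finset.card_image_of_injOn, ih (hc.mono (Set.Icc_subset_Icc le_rfl (by omega))),
      Finset.sum_Icc_succ_top (by omega)]
    · ring
    · intro A hA B hB hAB
      have hA' : c (s+1) ∉ A := fun h => lt_irrefl _ (hlt A hA _ h)
      have hB' : c (s+1) ∉ B := fun h => lt_irrefl _ (hlt B hB _ h)
      have := congrArg (fun t => Finset.erase t (c (s+1))) hAB
      simpa [Finset.erase_insert hA', Finset.erase_insert hB'] using this
    · rw [Finset.disjoint_left]
      intro A hA hB
      obtain ⟨B, hB, rfl⟩ := Finset.mem_image.1 hB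
      have := (Finset.mem_powersetCard.1 hA).1 (Finset.mem_insert_self _ _)
      simp at this

lemma Cf_init (c : ℕ → ℕ) (s : ℕ) (hc : StrictMonoOn c (Set.Icc 1 s)) (h1 : 2 ≤ c 1) :
    Finset.Colex.IsInitSeg (Cf c s) (s+1) := by
  induction s with
  | zero =>
    refine ⟨?_, ?_⟩
    · intro A hA; simp [Cf] at hA; subst hA; simp
    · intro A B hA hB
      simp [Cf] at hA; subst hA
      have := Finset.Colex.toColex_lt_singleton.1 hB.1
      obtain ⟨b, rfl⟩ := Finset.card_eq_one.1 hB.2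
      have := this b (by simp)
      omega
  | succ s ih =>
    have hlt := Cf_lt' c s hc h1
    have ih := ih (hc.mono (Set.Icc_subset_Icc le_rfl (by omega)))
    refine ⟨?_, ?_⟩
    · intro A hA
      simp only [Cf, Finset.coe_union, Finset.coe_image, Set.mem_union, Set.mem_image,
        Finset.mem_coe, Finset.mem_powersetCard] at hA
      rcases hA with hA | ⟨B, hB, rfl⟩
      · exact hA.2
      · rw [Finset.card_insert_of_notMem (fun h => lt_irrefl _ (hlt B hB _ h)), ih.1 hB]
    · intro A B hA hB
      simp only [Cf, Finset.mem_union] at hA ⊢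
      rcases hA with hA | hA
      · left; exact (initSeg_powersetCard _ _).2 hA hB
      · obtain ⟨A', hA', rfl⟩ := Finset.mem_image.1 hA
        have hle : ∀ b ∈ B, b ≤ c (s+1) := by
          apply Finset.Colex.forall_le_mono hB.1.le
          intro b hb
          rcases Finset.mem_insert.1 hb with rfl | hb
          · exact le_rfl
          · exact (hlt A' hA' b hb).le
        by_cases hcB : c (s+1) ∈ B
        · right
          refine Finset.mem_image.2 ⟨B.erase (c (s+1)), ?_, Finset.insert_erase hcB⟩
          refine ih.2 hA' ⟨?_, ?_⟩
          · have hA'' : c (s+1) ∉ A' := fun h => lt_irrefl _ (hlt A' hA' _ h)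
            have := (Finset.Colex.toColex_sdiff_lt_toColex_sdiff
              (u := {c (s+1)}) (s := B) (t := insert (c (s+1)) A') (by simpa using hcB)
              (by simp)).2 hB.1
            simpa [Finset.sdiff_singleton_eq_erase, Finset.erase_insert hA''] using this
          · rw [Finset.card_erase_of_mem hcB, hB.2]; rfl
        · left
          refine Finset.mem_powersetCard.2 ⟨fun x hx => ?_, hB.2⟩
          rw [Finset.mem_range]
          exact lt_of_le_of_ne (hle x hx) (fun h => hcB (h ▸ hx))

lemma Cf_shadow (c : ℕ → ℕ) (s : ℕ) (hc : StrictMonoOn c (Set.Icc 1 s)) (h1 : 2 ≤ c 1) :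
    ∑ i ∈ Finset.Icc 1 s, (c i).choose i + 1 ≤ (Finset.shadow (Cf c s)).card := by
  induction s with
  | zero => simp [Cf]
  | succ s ih =>
    have hlt := Cf_lt' c s hc h1
    have ih := ih (hc.mono (Set.Icc_subset_Icc le_rfl (by omega)))
    have hltS : ∀ A ∈ Finset.shadow (Cf c s), c (s+1) ∉ A := by
      intro A hA h
      obtain ⟨B, hB, hAB⟩ := Finset.exists_subset_of_mem_shadow hA
      exact lt_irrefl _ (hlt B hB _ (hAB h))
    have hsub : Finset.powersetCard (s+1) (Finset.range (c (s+1))) ∪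
        (Finset.shadow (Cf c s)).image (insert (c (s+1))) ⊆ Finset.shadow (Cf c (s+1)) := by
      apply Finset.union_subset
      · refine (shadow_powersetCard (s+1) (c (s+1)) (c_ge c (s+1) hc h1 _ (by omega) le_rfl)).trans ?_
        apply Finset.shadow_mono
        exact Finset.subset_union_left
      · intro A hA
        obtain ⟨B, hB, rfl⟩ := Finset.mem_image.1 hA
        have hcB := hltS B hB
        rw [Finset.mem_shadow_iff_insert_mem] at hB ⊢
        obtain ⟨a, ha, haB⟩ := hB
        have : a < c (s+1) := hlt _ haB a (Finset.mem_insert_self _ _)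
        refine ⟨a, ?_, ?_⟩
        · simp [ha]; omega
        · rw [Finset.insert_comm, Cf]
          exact Finset.mem_union_right _ (Finset.mem_image_of_mem _ haB)
    refine le_trans ?_ (Finset.card_le_card hsub)
    rw [Finset.card_union_of_disjoint, Finset.card_powersetCard, Finset.card_range,
      Finset.card_image_of_injOn, Finset.sum_Icc_succ_top (by omega)]
    · omega
    · intro A hA B hB hAB
      have hA' := hltS A hA
      have hB' := hltS B hB
      have := congrArg (fun t => Finset.erase t (c (s+1))) hAB
      simpa [Finset.erase_insert hA', Finset.erase_insert hB'] using this
    · rw [Finset.disjoint_left]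
      intro A hA hB
      obtain ⟨B, hB, rfl⟩ := Finset.mem_image.1 hB
      have := (Finset.mem_powersetCard.1 hA).1 (Finset.mem_insert_self _ _)
      simp at this

/-- Kruskal–Katona in cascade form. -/
lemma kk_cascade (c : ℕ → ℕ) (s : ℕ) (hc : StrictMonoOn c (Set.Icc 1 s)) (h1 : 2 ≤ c 1)
    (𝒜 : Finset (Finset ℕ)) (hA : ∀ A ∈ 𝒜, A.card = s + 1)
    (hb : (Finset.shadow 𝒜).card ≤ ∑ i ∈ Finset.Icc 1 s, (c i).choose i) :
    𝒜.card ≤ ∑ i ∈ Finset.Icc 1 s, (c i).choose (i+1) := by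
  by_contra hcon
  have := kk_nat hA (Cf_init c s hc h1) (by rw [Cf_card c s hc h1]; omega)
  have := Cf_shadow c s hc h1
  omega

lemma kk_choose (s m : ℕ) (hm : s + 1 ≤ m) (𝒜 : Finset (Finset ℕ)) (hA : ∀ A ∈ 𝒜, A.card = s + 1)
    (hb : (Finset.shadow 𝒜).card < m.choose s) : 𝒜.card < m.choose (s+1) := by
  by_contra hcon
  have h := kk_nat hA (initSeg_powersetCard (s+1) m) (by simpa using hcon)
  have := Finset.card_le_card (shadow_powersetCard s m hm)
  simp only [Finset.card_powersetCard, Finset.card_range] at this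
  omega

/-- coning -/
lemma cone (c : ℕ → ℕ) (s : ℕ) (hc : StrictMonoOn c (Set.Icc 1 (s+1))) (h1 : 2 ≤ c 1)
    (𝒜 : Finset (Finset ℕ)) (hA : ∀ A ∈ 𝒜, A.card = s + 2) (j : ℕ) (hj : s + 2 ≤ j)
    (hjA : j.choose (s+2) ≤ 𝒜.card)
    (hb : (Finset.shadow 𝒜).card + j.choose s ≤ ∑ i ∈ Finset.Icc 1 (s+1), (c i).choose i) :
    𝒜.card + j.choose (s+1) ≤ ∑ i ∈ Finset.Icc 1 (s+1), (c i).choose (i+1) := by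
  classical
  obtain ⟨𝒞, hC, hCA⟩ := exists_initSeg_card (s+2) (by omega) 𝒜.card
  have hshC := kk_nat hA hC hCA.le
  have hsub : Finset.powersetCard (s+2) (Finset.range j) ⊆ 𝒞 := by
    rcases hC.total (initSeg_powersetCard (s+2) j) with h | h
    · have := Finset.eq_of_subset_of_card_le h (by rw [hCA]; simpa using hjA)
      rw [this]
    · exact h
  obtain ⟨n, hnC, hnj⟩ : ∃ n, (∀ A ∈ 𝒞, n ∉ A) ∧ j ≤ n := by
    refine ⟨(𝒞.sup id).sup id + 1 + j, fun A hA hx => ?_, by omega⟩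
    have : (𝒞.sup id).sup id + 1 + j ≤ (𝒞.sup id).sup id :=
      Finset.le_sup (f := id) (s := 𝒞.sup id) (Finset.mem_sup.2 ⟨A, hA, hx⟩)
    omega
  have hnot : ∀ i, ∀ A ∈ Finset.powersetCard i (Finset.range j), n ∉ A := by
    intro i A hA h
    have := Finset.mem_range.1 ((Finset.mem_powersetCard.1 hA).1 h)
    omega
  have hinj : ∀ i, Set.InjOn (insert n)
      (Finset.powersetCard i (Finset.range j) : Set (Finset ℕ)) := by
    intro i A hA B hB hAB
    have := congrArg (fun t => Finset.erase t n) hAB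
    simpa [Finset.erase_insert (hnot i A hA), Finset.erase_insert (hnot i B hB)] using this
  set 𝒟 := 𝒞 ∪ (Finset.powersetCard (s+1) (Finset.range j)).image (insert n) with hD
  have hDcard : 𝒟.card = 𝒜.card + j.choose (s+1) := by
    rw [hD, Finset.card_union_of_disjoint, Finset.card_image_of_injOn (hinj _), hCA]
    · simp
    · rw [Finset.disjoint_left]
      intro A hA hB
      obtain ⟨B, hB, rfl⟩ := Finset.mem_image.1 hB
      exact hnC _ hA (Finset.mem_insert_self _ _)
  rw [← hDcard]
  apply kk_cascade c (s+1) hc h1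
  · intro A hA
    rcases Finset.mem_union.1 hA with hA | hA
    · exact hC.1 hA
    · obtain ⟨B, hB, rfl⟩ := Finset.mem_image.1 hA
      rw [Finset.card_insert_of_notMem (hnot _ B hB), (Finset.mem_powersetCard.1 hB).2]
  · have hsh : Finset.shadow 𝒟 ⊆ Finset.shadow 𝒞 ∪
        (Finset.powersetCard s (Finset.range j)).image (insert n) := by
      intro t ht
      obtain ⟨A, hA, a, ha, rfl⟩ := Finset.mem_shadow_iff.1 ht
      rcases Finset.mem_union.1 hA with hA | hA
      · exact Finset.mem_union_left _ (Finset.erase_mem_shadow hA ha)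
      · obtain ⟨B, hB, rfl⟩ := Finset.mem_image.1 hA
        have hnB := hnot _ B hB
        rcases Finset.mem_insert.1 ha with rfl | ha
        · rw [Finset.erase_insert hnB]
          apply Finset.mem_union_left
          exact Finset.shadow_mono hsub (shadow_powersetCard (s+1) j hj hB)
        · apply Finset.mem_union_right
          have hne : n ≠ a := fun h => hnB (h ▸ ha)
          rw [Finset.erase_insert_of_ne hne]
          rw [Finset.mem_powersetCard] at hB
          exact Finset.mem_image_of_mem _ (Finset.mem_powersetCard.2
            ⟨(Finset.erase_subset _ _).trans hB.1, by rw [Finset.card_erase_of_mem ha, hB.2]; rfl⟩)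
    have h2 := (Finset.card_le_card hsh).trans (Finset.card_union_le _ _)
    rw [Finset.card_image_of_injOn (hinj _)] at h2
    simp only [Finset.card_powersetCard, Finset.card_range] at h2
    omega


/-- Valid pairs, with sets of sizes r+1 and r. -/
def Val (r k : ℕ) (𝒜 ℬ : Finset (Finset ℕ)) : Prop :=
  (∀ A ∈ 𝒜, A.card = r + 1) ∧ (∀ B ∈ ℬ, B.card = r) ∧
    ∀ A ∈ 𝒜, k ≤ (A.filter (fun x => A.erase x ∈ ℬ)).card

lemma Val.ofNot {r k : ℕ} {𝒜 ℬ : Finset (Finset ℕ)} (h : Val r k 𝒜 ℬ) (x : ℕ) :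
    Val r k (𝒜.filter (fun A => x ∉ A)) (ℬ.filter (fun B => x ∉ B)) := by
  refine ⟨fun A hA => h.1 A (Finset.mem_filter.1 hA).1, fun B hB => h.2.1 B (Finset.mem_filter.1 hB).1,
    fun A hA => (h.2.2 A (Finset.mem_filter.1 hA).1).trans (Finset.card_le_card ?_)⟩
  intro y hy
  rw [Finset.mem_filter] at hy hA ⊢
  refine ⟨hy.1, Finset.mem_filter.2 ⟨hy.2, fun hx => hA.2 (Finset.mem_of_mem_erase hx)⟩⟩

lemma Val.ofP {r k : ℕ} {𝒜 ℬ : Finset (Finset ℕ)} (h : Val r k 𝒜 ℬ) (x : ℕ) :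
    Val r k (𝒜.filter (fun A => x ∈ A ∧ A.erase x ∉ ℬ)) (ℬ.filter (fun B => x ∈ B)) := by
  refine ⟨fun A hA => h.1 A (Finset.mem_filter.1 hA).1, fun B hB => h.2.1 B (Finset.mem_filter.1 hB).1,
    fun A hA => (h.2.2 A (Finset.mem_filter.1 hA).1).trans (Finset.card_le_card ?_)⟩
  intro y hy
  rw [Finset.mem_filter] at hy hA ⊢
  refine ⟨hy.1, Finset.mem_filter.2 ⟨hy.2, Finset.mem_erase.2 ⟨?_, hA.2.1⟩⟩⟩
  rintro rfl
  exact hA.2.2 hy.2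

lemma erase_injOn (x : ℕ) (𝒜 : Finset (Finset ℕ)) (h : ∀ A ∈ 𝒜, x ∈ A) :
    Set.InjOn (fun A : Finset ℕ => A.erase x) (𝒜 : Set (Finset ℕ)) := by
  intro A hA B hB hAB
  have := congrArg (insert x) hAB
  simpa [Finset.insert_erase (h A hA), Finset.insert_erase (h B hB)] using this

lemma Val.ofQ {r k : ℕ} {𝒜 ℬ : Finset (Finset ℕ)} (h : Val (r+1) (k+1) 𝒜 ℬ) (x : ℕ) :
    Val r k ((𝒜.filter (fun A => x ∈ A ∧ A.erase x ∈ ℬ)).image (fun A => A.erase x))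
      ((ℬ.filter (fun B => x ∈ B)).image (fun B => B.erase x)) := by
  refine ⟨?_, ?_, ?_⟩
  · intro A hA
    obtain ⟨A', hA', rfl⟩ := Finset.mem_image.1 hA
    rw [Finset.mem_filter] at hA'
    rw [Finset.card_erase_of_mem hA'.2.1, h.1 A' hA'.1]; rfl
  · intro A hA
    obtain ⟨A', hA', rfl⟩ := Finset.mem_image.1 hA
    rw [Finset.mem_filter] at hA'
    rw [Finset.card_erase_of_mem hA'.2, h.2.1 A' hA'.1]; rfl
  · intro A hA
    obtain ⟨A', hA', rfl⟩ := Finset.mem_image.1 hA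
    rw [Finset.mem_filter] at hA'
    have h1 := h.2.2 A' hA'.1
    have h2 : (A'.filter (fun y => A'.erase y ∈ ℬ)).card - 1 ≤
        ((A'.filter (fun y => A'.erase y ∈ ℬ)).erase x).card := Finset.pred_card_le_card_erase
    refine le_trans (by omega) (h2.trans (Finset.card_le_card ?_))
    intro y hy
    rw [Finset.mem_erase, Finset.mem_filter] at hy
    rw [Finset.mem_filter, Finset.mem_erase]
    refine ⟨⟨hy.1, hy.2.1⟩, Finset.mem_image.2 ⟨A'.erase y, Finset.mem_filter.2
      ⟨hy.2.2, Finset.mem_erase.2 ⟨hy.1.symm, hA'.2.1⟩⟩, Finset.erase_right_comm⟩⟩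

lemma Val.ofNotSub {r k : ℕ} {𝒜 ℬ : Finset (Finset ℕ)} (h : Val r k 𝒜 ℬ) (S : Finset ℕ) :
    Val r k (𝒜.filter (fun A => ¬ S ⊆ A)) (ℬ.filter (fun B => ¬ S ⊆ B)) := by
  refine ⟨fun A hA => h.1 A (Finset.mem_filter.1 hA).1, fun B hB => h.2.1 B (Finset.mem_filter.1 hB).1,
    fun A hA => (h.2.2 A (Finset.mem_filter.1 hA).1).trans (Finset.card_le_card ?_)⟩
  intro y hy
  rw [Finset.mem_filter] at hy hA ⊢
  exact ⟨hy.1, Finset.mem_filter.2 ⟨hy.2, fun hx => hA.2 (hx.trans (Finset.erase_subset _ _))⟩⟩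

lemma split_card (𝒜 ℬ : Finset (Finset ℕ)) (x : ℕ) :
    𝒜.card = (𝒜.filter (fun A => x ∉ A)).card +
      ((𝒜.filter (fun A => x ∈ A ∧ A.erase x ∉ ℬ)).card +
        (𝒜.filter (fun A => x ∈ A ∧ A.erase x ∈ ℬ)).card) := by
  rw [← Finset.card_filter_add_card_filter_not (s := 𝒜) (fun A => x ∈ A), add_comm,
    ← Finset.card_filter_add_card_filter_not (s := 𝒜.filter (fun A => x ∈ A)) (fun A => A.erase x ∈ ℬ),
    Finset.filter_filter, Finset.filter_filter]
  omega

/-- Existence of a maximal core. -/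
lemma exists_core {r s : ℕ} {𝒜 ℬ : Finset (Finset ℕ)} (h : Val r (s+1) 𝒜 ℬ) (hne : 𝒜.Nonempty) :
    ∃ S : Finset ℕ, S.card + s = r ∧ 1 ≤ (ℬ.filter (fun B => S ⊆ B)).card ∧
      ∀ S' : Finset ℕ, S'.card + s = r →
        (ℬ.filter (fun B => S' ⊆ B)).card ≤ (ℬ.filter (fun B => S ⊆ B)).card := by
  classical
  obtain ⟨A, hA⟩ := hne
  have h1 := h.2.2 A hA
  have h2 := h.1 A hA
  have h3 := Finset.card_filter_le A (fun x => A.erase x ∈ ℬ)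
  obtain ⟨x, hx⟩ : (A.filter (fun x => A.erase x ∈ ℬ)).Nonempty := by
    rw [← Finset.card_pos]; omega
  rw [Finset.mem_filter] at hx
  obtain ⟨S0, hS0, hS0c⟩ := Finset.exists_subset_card_eq (s := A.erase x) (n := r - s)
    (by rw [h.2.1 _ hx.2]; omega)
  set cand := ℬ.biUnion (fun B => Finset.powersetCard (r - s) B)
  have hmem0 : S0 ∈ cand := Finset.mem_biUnion.2 ⟨_, hx.2, Finset.mem_powersetCard.2 ⟨hS0, hS0c⟩⟩
  obtain ⟨S, hS, hmax⟩ := Finset.exists_max_image cand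
    (fun S => (ℬ.filter (fun B => S ⊆ B)).card) ⟨S0, hmem0⟩
  obtain ⟨B, hB, hSB⟩ := Finset.mem_biUnion.1 hS
  rw [Finset.mem_powersetCard] at hSB
  refine ⟨S, by omega, Finset.card_pos.2 ⟨B, Finset.mem_filter.2 ⟨hB, hSB.1⟩⟩, ?_⟩
  intro S' hS'
  by_cases hc : S' ∈ cand
  · exact hmax S' hc
  · have : ℬ.filter (fun B => S' ⊆ B) = ∅ := by
      rw [Finset.filter_eq_empty_iff]
      intro B hB hsub
      exact hc (Finset.mem_biUnion.2 ⟨B, hB, Finset.mem_powersetCard.2 ⟨hsub, by omega⟩⟩)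
    rw [this]; simp

/-- Peeling off a core. -/
lemma peel {r s : ℕ} {𝒜 ℬ : Finset (Finset ℕ)} (h : Val r (s+1) 𝒜 ℬ) (S : Finset ℕ)
    (hS : S.card + s = r) :
    ∃ 𝒜₀ : Finset (Finset ℕ), (∀ A ∈ 𝒜₀, A.card = s + 1) ∧
      (Finset.shadow 𝒜₀).card ≤ (ℬ.filter (fun B => S ⊆ B)).card ∧
      𝒜.card ≤ 𝒜₀.card + (ℬ.filter (fun B => ¬ S ⊆ B)).card
        + (𝒜.filter (fun A => ¬ S ⊆ A)).card := by
  classical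
  set 𝒢 := 𝒜.filter (fun A => S ⊆ A ∧ ∀ y ∈ A \ S, A.erase y ∈ ℬ) with hG
  have hsd : ∀ A ∈ 𝒢, S ⊆ A := fun A hA => (Finset.mem_filter.1 hA).2.1
  refine ⟨𝒢.image (fun A => A \ S), ?_, ?_, ?_⟩
  · intro A hA
    obtain ⟨A', hA', rfl⟩ := Finset.mem_image.1 hA
    rw [Finset.card_sdiff_of_subset (hsd A' hA'), h.1 A' (Finset.mem_filter.1 hA').1]
    omega
  · have : Finset.shadow (𝒢.image (fun A => A \ S)) ⊆
        (ℬ.filter (fun B => S ⊆ B)).image (fun B => B \ S) := by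
      intro t ht
      obtain ⟨A, hA, a, ha, rfl⟩ := Finset.mem_shadow_iff.1 ht
      obtain ⟨A', hA', rfl⟩ := Finset.mem_image.1 hA
      have hA'' := (Finset.mem_filter.1 hA').2
      refine Finset.mem_image.2 ⟨A'.erase a, Finset.mem_filter.2 ⟨hA''.2 a ha, ?_⟩, ?_⟩
      · intro z hz
        refine Finset.mem_erase.2 ⟨?_, hA''.1 hz⟩
        rintro rfl
        exact (Finset.mem_sdiff.1 ha).2 hz
      · ext z; simp only [Finset.mem_sdiff, Finset.mem_erase]; tauto
    exact (Finset.card_le_card this).trans Finset.card_image_le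
  · have h1 : (𝒢.image (fun A => A \ S)).card = 𝒢.card := by
      apply Finset.card_image_of_injOn
      intro A hA B hB hAB
      have := congrArg (fun t => t ∪ S) hAB
      simpa [Finset.sdiff_union_of_subset (hsd A hA), Finset.sdiff_union_of_subset (hsd B hB)]
        using this
    have h2 : 𝒜 ⊆ 𝒢 ∪ (ℬ.filter (fun B => ¬ S ⊆ B)).image (fun B => B ∪ S) ∪
        𝒜.filter (fun A => ¬ S ⊆ A) := by
      intro A hA
      by_cases hSA : S ⊆ A
      · apply Finset.mem_union_left
        by_cases hall : ∀ y ∈ A \ S, A.erase y ∈ ℬ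
        · exact Finset.mem_union_left _ (Finset.mem_filter.2 ⟨hA, hSA, hall⟩)
        · apply Finset.mem_union_right
          push Not at hall
          obtain ⟨y, hy, hyB⟩ := hall
          have hex : ∃ z ∈ S, A.erase z ∈ ℬ := by
            by_contra hcon
            push Not at hcon
            have hsub : A.filter (fun x => A.erase x ∈ ℬ) ⊆ (A \ S).erase y := by
              intro w hw
              rw [Finset.mem_filter] at hw
              refine Finset.mem_erase.2 ⟨?_, Finset.mem_sdiff.2 ⟨hw.1, fun hwS => hcon w hwS hw.2⟩⟩
              rintro rfl
              exact hyB hw.2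
            have := Finset.card_le_card hsub
            rw [Finset.card_erase_of_mem hy, Finset.card_sdiff_of_subset hSA, h.1 A hA] at this
            have := h.2.2 A hA
            omega
          obtain ⟨z, hz, hzB⟩ := hex
          refine Finset.mem_image.2 ⟨A.erase z, Finset.mem_filter.2 ⟨hzB, fun hsub => ?_⟩, ?_⟩
          · exact Finset.notMem_erase z A (hsub hz)
          · ext w
            simp only [Finset.mem_union, Finset.mem_erase]
            constructor
            · rintro (hw | hw)
              · exact hw.2
              · exact hSA hw
            · intro hw
              by_cases hwz : w = z
              · right; rw [hwz]; exact hz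
              · left; exact ⟨hwz, hw⟩
      · exact Finset.mem_union_right _ (Finset.mem_filter.2 ⟨hA, hSA⟩)
    rw [h1]
    have h3 := Finset.card_le_card h2
    have h4 := Finset.card_union_le (𝒢 ∪ (ℬ.filter (fun B => ¬ S ⊆ B)).image (fun B => B ∪ S))
      (𝒜.filter (fun A => ¬ S ⊆ A))
    have h5 := Finset.card_union_le 𝒢 ((ℬ.filter (fun B => ¬ S ⊆ B)).image (fun B => B ∪ S))
    have h6 := Finset.card_image_le (s := ℬ.filter (fun B => ¬ S ⊆ B)) (f := fun B => B ∪ S)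
    omega

/-! ### Numerical inequalities -/

lemma conv_ineq {g x y : ℝ} (hg : 0 < g) (hx : 0 ≤ x) (hy : 0 ≤ y) :
    x ^ (1+g) + y ^ (1+g) + (1 - (2:ℝ)^(-g)) * (min x y * (x+y)^g) ≤ (x+y)^(1+g) := by
  wlog hxy : y ≤ x generalizing x y
  · have := this hy hx (le_of_not_ge hxy)
    rw [min_comm, add_comm y x] at this
    linarith
  rw [min_eq_right hxy]
  have e : ∀ z : ℝ, 0 ≤ z → z ^ (1+g) = z * z ^ g := by
    intro z hz
    rw [Real.rpow_add' hz (by linarith), Real.rpow_one]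
  rw [e x hx, e y hy, e (x+y) (by linarith)]
  have h1 : x ^ g ≤ (x+y)^g := Real.rpow_le_rpow hx (by linarith) hg.le
  have h2 : y ^ g ≤ (2:ℝ)^(-g) * (x+y)^g := by
    calc y ^ g ≤ ((x+y)/2)^g := Real.rpow_le_rpow hy (by linarith) hg.le
      _ = (2:ℝ)^(-g) * (x+y)^g := by
        rw [Real.div_rpow (by linarith) (by norm_num), Real.rpow_neg (by norm_num)]
        field_simp
  have h3 := mul_le_mul_of_nonneg_left h1 hx
  have h4 := mul_le_mul_of_nonneg_left h2 hy
  nlinarith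

lemma two_rpow_lt {g : ℝ} (hg : 0 < g) : 0 < 1 - (2:ℝ)^(-g) := by
  have := Real.rpow_lt_one_of_one_lt_of_neg (x := 2) (by norm_num) (z := -g) (by linarith)
  linarith

lemma cross_bound {g v Q b1 b2 K t : ℝ} (hg : 0 < g) (hg1 : g < 1) (h1 : (1+v)*(1-g) = 1)
    (h2 : v*(1-g) = g) (hQ : 0 ≤ Q) (hb1 : 0 ≤ b1) (hK : 1 ≤ K) (ht : 1 ≤ t)
    (hQ2 : Q ≤ b2) (hQ1 : Q ≤ K * b1^(1+v) * t^v) (hb : 1 ≤ b1 + b2) :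
    Q ≤ K * (min b1 b2 * (b1+b2)^g) * t^g := by
  have hb2 : 0 ≤ b2 := hQ.trans hQ2
  have htg : 1 ≤ t^g := Real.one_le_rpow ht hg.le
  rcases le_total b1 b2 with h | h
  · rw [min_eq_left h]
    have e : Q = Q^g * Q^(1-g) := by
      rw [← Real.rpow_add' hQ (by simp)]; simp
    have f1 : Q^g ≤ (b1+b2)^g := Real.rpow_le_rpow hQ (by linarith) hg.le
    have f2 : Q^(1-g) ≤ K * b1 * t^g := by
      calc Q^(1-g) ≤ (K * b1^(1+v) * t^v)^(1-g) := Real.rpow_le_rpow hQ hQ1 (by linarith)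
        _ = K^(1-g) * b1 * t^g := by
          rw [Real.mul_rpow (by positivity) (by positivity), Real.mul_rpow (by positivity)
            (by positivity), ← Real.rpow_mul hb1, ← Real.rpow_mul (by linarith), h1, h2,
            Real.rpow_one]
        _ ≤ K * b1 * t^g := by
          have : K^(1-g) ≤ K^(1:ℝ) := Real.rpow_le_rpow_of_exponent_le hK (by linarith)
          rw [Real.rpow_one] at this
          gcongr
    calc Q = Q^g * Q^(1-g) := e
      _ ≤ (b1+b2)^g * (K * b1 * t^g) := by gcongr
      _ = _ := by ring
  · rw [min_eq_right h]
    have : 1 ≤ (b1+b2)^g := Real.one_le_rpow hb hg.le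
    calc Q ≤ b2 := hQ2
      _ = 1 * (b2 * 1) * 1 := by ring
      _ ≤ _ := by gcongr

def WProp (s : ℕ) : Prop := ∃ K : ℝ, 1 ≤ K ∧ ∀ (r : ℕ) (t : ℝ) (𝒜 ℬ : Finset (Finset ℕ)),
  Val r (s+1) 𝒜 ℬ → 1 ≤ t →
  (∀ S : Finset ℕ, S.card + s = r → ((ℬ.filter (fun B => S ⊆ B)).card : ℝ) ≤ t) →
  (𝒜.card : ℝ) ≤ K * (ℬ.card : ℝ)^(1 + 1/(2*(s:ℝ))) * t^(1/(2*(s:ℝ)))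

def VProp (s : ℕ) : Prop := ∃ K : ℝ, 1 ≤ K ∧ ∀ (r : ℕ) (α : ℝ) (𝒜 ℬ : Finset (Finset ℕ)),
  Val r (s+1) 𝒜 ℬ → 1 ≤ α →
  (∀ S : Finset ℕ, S.card + s = r → ((𝒜.filter (fun A => S ⊆ A)).card : ℝ) ≤ α) →
  (𝒜.card : ℝ) ≤ K * (ℬ.card : ℝ)^(1 + 1/(2*(s:ℝ)+1)) * α^(1/(2*(s:ℝ)+1))

lemma VProp_zero : VProp 0 := by
  classical
  refine ⟨1, le_rfl, ?_⟩
  intro r α 𝒜 ℬ h hα hS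
  have h1 : 𝒜 ⊆ ℬ.biUnion (fun B => 𝒜.filter (fun A => B ⊆ A)) := by
    intro A hA
    obtain ⟨x, hx⟩ : (A.filter (fun x => A.erase x ∈ ℬ)).Nonempty := by
      rw [← Finset.card_pos]; have := h.2.2 A hA; omega
    rw [Finset.mem_filter] at hx
    exact Finset.mem_biUnion.2 ⟨_, hx.2, Finset.mem_filter.2 ⟨hA, Finset.erase_subset _ _⟩⟩
  have h2 := (Finset.card_le_card h1).trans Finset.card_biUnion_le
  have h3 : (𝒜.card : ℝ) ≤ ∑ B ∈ ℬ, α := by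
    calc (𝒜.card : ℝ) ≤ ((∑ B ∈ ℬ, (𝒜.filter (fun A => B ⊆ A)).card : ℕ) : ℝ) := by
          exact_mod_cast h2
      _ ≤ _ := by
        push_cast
        exact Finset.sum_le_sum (fun B hB => hS B (by simpa using h.2.1 B hB))
  simp only [Finset.sum_const, nsmul_eq_mul] at h3
  have e : (1 + 1/(2*((0:ℕ):ℝ)+1)) = 2 := by norm_num
  have e' : (1/(2*((0:ℕ):ℝ)+1)) = 1 := by norm_num
  rw [e, e', Real.rpow_one, Real.rpow_two]
  refine h3.trans ?_
  have : (ℬ.card : ℝ) ≤ (ℬ.card : ℝ)^2 := by exact_mod_cast Nat.le_self_pow (by norm_num) _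
  have : (ℬ.card : ℝ) * α ≤ (ℬ.card : ℝ)^2 * α := by gcongr
  linarith

lemma card_le_of_inj_insert {𝒬 ℬ : Finset (Finset ℕ)} (x : ℕ)
    (h : ∀ A ∈ 𝒬, x ∈ A ∧ A.erase x ∈ ℬ) : 𝒬.card ≤ (ℬ.filter (fun B => x ∉ B)).card := by
  apply Finset.card_le_card_of_injOn (fun A => A.erase x)
  · intro A hA
    exact Finset.mem_coe.2 (Finset.mem_filter.2 ⟨(h A hA).2, Finset.notMem_erase _ _⟩)
  · exact erase_injOn x 𝒬 (fun A hA => (h A hA).1)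

lemma W_of_V (s : ℕ) (hV : VProp s) : WProp (s+1) := by
  classical
  obtain ⟨K, hK, hV⟩ := hV
  set g : ℝ := 1/(2*((s+1:ℕ):ℝ)) with hg
  set v : ℝ := 1/(2*(s:ℝ)+1) with hv
  have hs0 : (0:ℝ) ≤ s := Nat.cast_nonneg s
  have hg0 : 0 < g := by rw [hg]; positivity
  have hg1 : g < 1 := by
    rw [hg, div_lt_one (by positivity)]; push_cast; linarith
  have e1 : (1+v)*(1-g) = 1 := by rw [hv, hg]; push_cast; field_simp; ring
  have e2 : v*(1-g) = g := by rw [hv, hg]; push_cast; field_simp; ring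
  set d : ℝ := 1 - (2:ℝ)^(-g) with hd
  have hd0 : 0 < d := two_rpow_lt hg0
  have hd1 : d ≤ 1 := by
    have : 0 < (2:ℝ)^(-g) := by positivity
    linarith
  have hKd : 1 ≤ K / d := by rw [le_div_iff₀ hd0]; linarith
  refine ⟨K/d, hKd, ?_⟩
  intro r t 𝒜 ℬ
  induction hb : ℬ.card using Nat.strong_induction_on generalizing 𝒜 ℬ with
  | _ b ih =>
  intro h ht hS
  have htg : 1 ≤ t^g := Real.one_le_rpow ht hg0.le
  by_cases hb2 : b ≤ 1
  · have : 𝒜 = ∅ := by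
      by_contra hne
      obtain ⟨A, hA⟩ := Finset.nonempty_iff_ne_empty.2 hne
      have h1 := h.2.2 A hA
      obtain ⟨y, z, hy, hz, hyz⟩ := Finset.one_lt_card_iff.1 (show 1 < (A.filter (fun x => A.erase x ∈ ℬ)).card by omega)
      rw [Finset.mem_filter] at hy hz
      have := Finset.card_le_one.1 (hb ▸ hb2) _ hy.2 _ hz.2
      apply Finset.notMem_erase y A
      rw [this]
      exact Finset.mem_erase.2 ⟨hyz, hy.1⟩
    rw [this]
    simp only [Finset.card_empty, Nat.cast_zero]
    positivity
  · obtain ⟨B1, hB1, B2, hB2, hne⟩ := Finset.one_lt_card.1 (show 1 < ℬ.card by omega)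
    obtain ⟨x, hx1, hx2⟩ : ∃ x, x ∈ B1 ∧ x ∉ B2 := by
      by_contra hcon
      push Not at hcon
      exact hne (Finset.eq_of_subset_of_card_le hcon (by rw [h.2.1 B1 hB1, h.2.1 B2 hB2]))
    obtain ⟨r', rfl⟩ : ∃ r', r = r' + 1 := by
      have := h.2.1 B1 hB1
      have := Finset.card_pos.2 ⟨x, hx1⟩
      exact ⟨r - 1, by omega⟩
    set ℬ1 := ℬ.filter (fun B => x ∈ B) with hℬ1
    set ℬ2 := ℬ.filter (fun B => x ∉ B) with hℬ2
    have hsum : ℬ1.card + ℬ2.card = b := by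
      rw [← hb]; exact Finset.card_filter_add_card_filter_not _
    have hp1 : 0 < ℬ1.card := Finset.card_pos.2 ⟨B1, Finset.mem_filter.2 ⟨hB1, hx1⟩⟩
    have hp2 : 0 < ℬ2.card := Finset.card_pos.2 ⟨B2, Finset.mem_filter.2 ⟨hB2, hx2⟩⟩
    have hSmono : ∀ ℬ' ⊆ ℬ, ∀ S : Finset ℕ, S.card + (s+1) = r'+1 →
        ((ℬ'.filter (fun B => S ⊆ B)).card : ℝ) ≤ t := by
      intro ℬ' hsub S hSc
      refine le_trans ?_ (hS S hSc)
      exact_mod_cast Finset.card_le_card (Finset.filter_subset_filter _ hsub)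
    have i1 := ih ℬ2.card (by omega) _ ℬ2 rfl (h.ofNot x) ht
      (hSmono _ (Finset.filter_subset _ _))
    have i2 := ih ℬ1.card (by omega) _ ℬ1 rfl (h.ofP x) ht
      (hSmono _ (Finset.filter_subset _ _))
    set 𝒬 := 𝒜.filter (fun A => x ∈ A ∧ A.erase x ∈ ℬ) with h𝒬
    have hQmem : ∀ A ∈ 𝒬, x ∈ A ∧ A.erase x ∈ ℬ := fun A hA => (Finset.mem_filter.1 hA).2
    have q2 : 𝒬.card ≤ ℬ2.card := card_le_of_inj_insert x hQmem
    have q1 := hV r' t _ _ (h.ofQ x) ht (by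
      intro S hSc
      refine le_trans ?_ (hS S (by omega))
      norm_cast
      apply Finset.card_le_card
      intro A hA
      rw [Finset.mem_filter] at hA ⊢
      obtain ⟨A', hA', rfl⟩ := Finset.mem_image.1 hA.1
      exact ⟨(hQmem A' hA').2, hA.2⟩)
    rw [Finset.card_image_of_injOn (erase_injOn x _ (fun A hA => (hQmem A hA).1)),
      Finset.card_image_of_injOn (erase_injOn x _ (fun B hB => (Finset.mem_filter.1 hB).2))] at q1
    have hc := cross_bound (b1 := (ℬ1.card : ℝ)) (b2 := (ℬ2.card : ℝ)) (Q := (𝒬.card : ℝ))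
      hg0 hg1 e1 e2 (by positivity) (by positivity) hK ht (by exact_mod_cast q2) q1
      (by exact_mod_cast (by omega))
    have hcv := conv_ineq (x := (ℬ1.card : ℝ)) (y := (ℬ2.card : ℝ)) hg0 (by positivity)
      (by positivity)
    have hsumR : (b : ℝ) = (ℬ1.card : ℝ) + ℬ2.card := by exact_mod_cast hsum.symm
    have hspl : (𝒜.card : ℝ) = _ := congrArg (Nat.cast (R := ℝ)) (split_card 𝒜 ℬ x)
    push_cast at hspl
    rw [hsumR, hspl]
    set X := (ℬ1.card : ℝ)
    set Y := (ℬ2.card : ℝ)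
    set M := min X Y * (X+Y)^g
    have e3 : K * M * t^g = K/d * (d * M) * t^g := by field_simp
    rw [e3] at hc
    have : K/d * (X^(1+g) + Y^(1+g) + d * M) * t^g ≤ K/d * (X+Y)^(1+g) * t^g := by
      gcongr
    calc _ ≤ K / d * Y ^ (1 + g) * t ^ g + (K / d * X ^ (1 + g) * t ^ g + K/d * (d * M) * t^g) := by
          gcongr
      _ = K/d * (X^(1+g) + Y^(1+g) + d * M) * t^g := by ring
      _ ≤ _ := this

lemma V_of_W (s : ℕ) (hs : 1 ≤ s) (hW : WProp s) : VProp s := by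
  classical
  obtain ⟨K, hK, hW⟩ := hW
  set g : ℝ := 1/(2*(s:ℝ)) with hg
  set v : ℝ := 1/(2*(s:ℝ)+1) with hv
  have hs0 : (1:ℝ) ≤ s := by exact_mod_cast hs
  have hg0 : 0 < g := by rw [hg]; positivity
  have hv0 : 0 < v := by rw [hv]; positivity
  have e1 : (1-v)*g = v := by rw [hv, hg]; field_simp; ring
  refine ⟨K, hK, ?_⟩
  intro r α 𝒜 ℬ
  induction hb : ℬ.card using Nat.strong_induction_on generalizing 𝒜 ℬ with
  | _ b ih =>
  intro h hα hS
  rcases 𝒜.eq_empty_or_nonempty with rfl | hne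
  · simp only [Finset.card_empty, Nat.cast_zero]; positivity
  obtain ⟨S, hSc, ht1, hmax⟩ := exists_core h hne
  set t := (ℬ.filter (fun B => S ⊆ B)).card with ht
  set ℬ' := ℬ.filter (fun B => ¬ S ⊆ B) with hℬ'
  have hsum : t + ℬ'.card = b := by rw [← hb]; exact Finset.card_filter_add_card_filter_not _
  have hb0 : (0:ℝ) < b := by exact_mod_cast (by omega)
  have ht0 : (1:ℝ) ≤ t := by exact_mod_cast ht1
  have hw := hW r t 𝒜 ℬ h ht0 (fun S' hS' => by exact_mod_cast hmax S' hS')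
  rw [hb] at hw
  by_cases hcase : α ≤ K * t * (b:ℝ)^v * α^v
  · have i1 := ih ℬ'.card (by omega) _ ℬ' rfl (h.ofNotSub S) hα (by
      intro S' hS'
      refine le_trans ?_ (hS S' hS')
      exact_mod_cast Finset.card_le_card (Finset.filter_subset_filter _ (Finset.filter_subset _ _)))
    have hcard : (𝒜.card : ℝ) = (𝒜.filter (fun A => S ⊆ A)).card +
        (𝒜.filter (fun A => ¬ S ⊆ A)).card := by
      exact_mod_cast (Finset.card_filter_add_card_filter_not _).symm
    have hSα := hS S hSc
    have hb'R : (ℬ'.card : ℝ) = b - t := by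
      rw [← hsum]; push_cast; ring
    have hpow : (ℬ'.card : ℝ)^(1+v) ≤ (b - t) * (b:ℝ)^v := by
      rw [Real.rpow_add' (by positivity) (by linarith), Real.rpow_one]
      have : (ℬ'.card : ℝ)^v ≤ (b:ℝ)^v := by
        apply Real.rpow_le_rpow (by positivity) _ hv0.le
        rw [hb'R]; linarith
      rw [← hb'R]
      gcongr
    have hb1 : (b:ℝ)^(1+v) = b * (b:ℝ)^v := by
      rw [Real.rpow_add hb0, Real.rpow_one]
    rw [hcard, hb1]
    calc _ ≤ K * t * (b:ℝ)^v * α^v + K * ((b - t) * (b:ℝ)^v) * α^v := by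
          refine add_le_add (hSα.trans hcase) (i1.trans ?_)
          gcongr
      _ = _ := by ring
  · push Not at hcase
    have hbv : 0 < (b:ℝ)^v := by positivity
    have hαv : 0 < α^v := by positivity
    have hα0 : (0:ℝ) < α := by linarith
    have h1 : t * (b:ℝ)^v ≤ α^(1-v) := by
      have : K * t * (b:ℝ)^v ≤ α^(1-v) := by
        by_contra hcon
        push Not at hcon
        have h3 := mul_lt_mul_of_pos_right hcon hαv
        rw [← Real.rpow_add hα0, sub_add_cancel, Real.rpow_one] at h3
        exact absurd h3 (not_lt.2 hcase.le)
      refine le_trans ?_ this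
      have h0 : 0 ≤ (t:ℝ) * (b:ℝ)^v := by positivity
      rw [mul_assoc]
      exact le_mul_of_one_le_left h0 hK
    have h2 : (t * (b:ℝ)^v)^g ≤ α^v := by
      calc _ ≤ (α^(1-v))^g := Real.rpow_le_rpow (by positivity) h1 hg0.le
        _ = α^v := by rw [← Real.rpow_mul (by linarith), e1]
    rw [Real.mul_rpow (by positivity) (by positivity), ← Real.rpow_mul hb0.le] at h2
    have e2 : (b:ℝ)^(1+g) = (b:ℝ)^(1+v) * (b:ℝ)^(v*g) := by
      rw [← Real.rpow_add hb0]; congr 1; linarith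
    calc (𝒜.card : ℝ) ≤ K * (b:ℝ)^(1+g) * t^g := hw
      _ = K * (b:ℝ)^(1+v) * (t^g * (b:ℝ)^(v*g)) := by rw [e2]; ring
      _ ≤ _ := by gcongr

lemma W_all (s : ℕ) : WProp (s+1) := by
  induction s with
  | zero => exact W_of_V 0 VProp_zero
  | succ s ih => exact W_of_V (s+1) (V_of_W (s+1) (by omega) ih)

/-- There is a core, containing many sets. -/
lemma core_lemma (s : ℕ) (hs : 1 ≤ s) : ∃ K : ℝ, 1 ≤ K ∧ ∀ (r : ℕ) (𝒜 ℬ : Finset (Finset ℕ)),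
    Val r (s+1) 𝒜 ℬ → 𝒜.Nonempty → ∃ S : Finset ℕ, S.card + s = r ∧
      1 ≤ (ℬ.filter (fun B => S ⊆ B)).card ∧
      (𝒜.card : ℝ) ≤ K * (ℬ.card : ℝ)^(1 + 1/(2*(s:ℝ))) *
        ((ℬ.filter (fun B => S ⊆ B)).card : ℝ)^(1/(2*(s:ℝ))) := by
  obtain ⟨s, rfl⟩ : ∃ s', s = s' + 1 := ⟨s - 1, by omega⟩
  obtain ⟨K, hK, hW⟩ := W_all s
  refine ⟨K, hK, fun r 𝒜 ℬ h hne => ?_⟩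
  obtain ⟨S, hSc, ht1, hmax⟩ := exists_core h hne
  exact ⟨S, hSc, ht1, hW r _ 𝒜 ℬ h (by exact_mod_cast ht1)
    (fun S' hS' => by exact_mod_cast hmax S' hS')⟩


noncomputable def phi (s : ℕ) : ℝ := ((s.factorial : ℝ)^(1/(s:ℝ)))/(s+1)

lemma phi_pos (s : ℕ) : 0 < phi s := by
  unfold phi
  have : (0:ℝ) < s.factorial := by exact_mod_cast s.factorial_pos
  positivity

lemma root_le {s : ℕ} (hs : 1 ≤ s) {x y : ℝ} (hy : 0 ≤ y) (h : y^s ≤ s.factorial * x) (hx : 0 ≤ x) :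
    y ≤ (s+1) * phi s * x^(1/(s:ℝ)) := by
  unfold phi
  have h2 := Real.rpow_le_rpow (by positivity) h (z := 1/(s:ℝ)) (by positivity)
  rw [one_div, Real.pow_rpow_inv_natCast hy (by omega), Real.mul_rpow (by positivity) hx] at h2
  have e : ((s:ℝ)+1) * ((s.factorial:ℝ)^(1/(s:ℝ))/(s+1)) = (s.factorial:ℝ)^(1/(s:ℝ)) := by
    field_simp
  rw [e, one_div]
  exact h2

lemma le_root {s : ℕ} (hs : 1 ≤ s) {x y : ℝ} (hy : 0 ≤ y) (h : s.factorial * x ≤ y^s) (hx : 0 ≤ x) :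
    (s+1) * phi s * x^(1/(s:ℝ)) ≤ y := by
  unfold phi
  have h2 := Real.rpow_le_rpow (by positivity) h (z := 1/(s:ℝ)) (by positivity)
  rw [one_div, Real.pow_rpow_inv_natCast hy (by omega), Real.mul_rpow (by positivity) hx] at h2
  have e : ((s:ℝ)+1) * ((s.factorial:ℝ)^(1/(s:ℝ))/(s+1)) = (s.factorial:ℝ)^(1/(s:ℝ)) := by
    field_simp
  rw [e, one_div]
  exact h2

lemma lt_choose_add (b s : ℕ) (hs : 1 ≤ s) : b < (b+s).choose s := by
  induction s, hs using Nat.le_induction with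
  | base => simp
  | succ s hs ih =>
    rw [← add_assoc, Nat.choose_succ_succ]; omega

lemma one_add_rpow {x h : ℝ} (hx : 0 ≤ x) (hh : 0 < h) : x^(1+h) = x * x^h := by
  rw [Real.rpow_add' hx (by linarith), Real.rpow_one]

lemma KKup {s : ℕ} (hs : 1 ≤ s) (𝒜 : Finset (Finset ℕ)) (hA : ∀ A ∈ 𝒜, A.card = s+1) (b : ℕ)
    (hb : (Finset.shadow 𝒜).card ≤ b) :
    (𝒜.card : ℝ) ≤ phi s * (b:ℝ)^(1+1/(s:ℝ)) + b := by
  have hφ := phi_pos s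
  rcases 𝒜.eq_empty_or_nonempty with rfl | ⟨A, hAm⟩
  · simp only [Finset.card_empty, Nat.cast_zero]; positivity
  have hb1 : 1 ≤ b := by
    refine le_trans (Finset.card_pos.2 ?_) hb
    obtain ⟨a, ha⟩ := Finset.card_pos.1 (by rw [hA A hAm]; omega : 0 < A.card)
    exact ⟨A.erase a, Finset.erase_mem_shadow hAm ha⟩
  have hex : ∃ m, b < (m+1).choose s := ⟨b + s - 1, by
    rw [Nat.sub_add_cancel (by omega)]; exact lt_choose_add b s hs⟩
  set m := Nat.find hex with hm
  have hm1 : b < (m+1).choose s := Nat.find_spec hex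
  have hms : s ≤ m := by
    by_contra hlt
    have : (m+1).choose s ≤ s.choose s := Nat.choose_le_choose s (by omega)
    rw [Nat.choose_self] at this
    omega
  have hm2 : m.choose s ≤ b := by
    have := Nat.find_min hex (m := m-1) (by omega)
    rw [Nat.sub_add_cancel (by omega)] at this
    omega
  have h1 := kk_choose s (m+1) (by omega) 𝒜 hA (by omega)
  rw [Nat.choose_succ_succ] at h1
  have h2 := Nat.choose_succ_right_eq m s
  have h3 : (((m + 1 - s : ℕ) : ℝ) ^ s) ≤ (s.factorial : ℝ) * (m.choose s) := by
    exact_mod_cast (Nat.pow_sub_le_descFactorial m s).trans (Nat.descFactorial_eq_factorial_mul_choose m s).le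
  have h4 : (((m + 1 - s : ℕ) : ℝ) ^ s) ≤ (s.factorial : ℝ) * b := by
    refine h3.trans ?_
    have : ((m.choose s : ℕ):ℝ) ≤ b := by exact_mod_cast hm2
    gcongr
  have h5 := root_le hs (by positivity) h4 (by positivity)
  have h6 : ((m.choose (s+1) : ℕ) : ℝ) * (s+1) = (m.choose s : ℕ) * ((m - s : ℕ):ℝ) := by
    exact_mod_cast h2
  have h7 : ((m - s : ℕ):ℝ) ≤ ((m + 1 - s : ℕ) : ℝ) := by exact_mod_cast (by omega)
  have h8 : ((m.choose s : ℕ):ℝ) ≤ b := by exact_mod_cast hm2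
  have h9 : ((m.choose (s+1) : ℕ) : ℝ) * (s+1) ≤ b * ((s+1) * phi s * (b:ℝ)^(1/(s:ℝ))) := by
    rw [h6]
    exact mul_le_mul h8 (h7.trans h5) (by positivity) (by positivity)
  have h10 : ((m.choose (s+1) : ℕ) : ℝ) ≤ phi s * (b:ℝ)^(1+1/(s:ℝ)) := by
    rw [one_add_rpow (by positivity) (by positivity)]
    have : (0:ℝ) < s + 1 := by positivity
    nlinarith
  have h11 : (𝒜.card : ℝ) ≤ (m.choose s : ℕ) + (m.choose (s+1) : ℕ) := by exact_mod_cast h1.le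
  linarith

lemma coreM {s : ℕ} (hs : 1 ≤ s) {ε : ℝ} (hε : 0 < ε) : ∃ M : ℝ, 1 ≤ M ∧
    ∀ (r : ℕ) (𝒜 ℬ : Finset (Finset ℕ)), Val r (s+1) 𝒜 ℬ → 𝒜.Nonempty →
      ε * (ℬ.card:ℝ)^(1+1/(s:ℝ)) ≤ 𝒜.card → ∃ S : Finset ℕ, S.card + s = r ∧
      1 ≤ (ℬ.filter (fun B => S ⊆ B)).card ∧
      (ℬ.card : ℝ) ≤ M * (ℬ.filter (fun B => S ⊆ B)).card := by
  obtain ⟨K, hK, hcore⟩ := core_lemma s hs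
  refine ⟨max 1 ((K/ε)^(2*s)), le_max_left _ _, fun r 𝒜 ℬ h hne hbig => ?_⟩
  obtain ⟨S, hS, ht, hle⟩ := hcore r 𝒜 ℬ h hne
  refine ⟨S, hS, ht, ?_⟩
  set t := (ℬ.filter (fun B => S ⊆ B)).card
  have htb : t ≤ ℬ.card := Finset.card_filter_le _ _
  have hb0 : (0:ℝ) < ℬ.card := by exact_mod_cast (by omega)
  set b : ℝ := (ℬ.card : ℝ)
  have hs0 : (0:ℝ) < s := by exact_mod_cast hs
  have e : (1 + 1/(s:ℝ)) = (1+1/(2*(s:ℝ))) + 1/(2*(s:ℝ)) := by field_simp; ring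
  rw [e, Real.rpow_add hb0] at hbig
  have h1 := hbig.trans hle
  have hp : 0 < b^(1+1/(2*(s:ℝ))) := by positivity
  have h2 : ε * b^(1/(2*(s:ℝ))) ≤ K * (t:ℝ)^(1/(2*(s:ℝ))) := by
    refine le_of_mul_le_mul_left ?_ hp
    linarith
  have h3 : b^(1/(2*(s:ℝ))) ≤ (K/ε) * (t:ℝ)^(1/(2*(s:ℝ))) := by
    rw [div_mul_eq_mul_div, le_div_iff₀ hε]; linarith
  have h4 := pow_le_pow_left₀ (by positivity) h3 (2*s)
  have e2 : ∀ x : ℝ, 0 ≤ x → (x^(1/(2*(s:ℝ))))^(2*s) = x := by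
    intro x hx
    rw [← Real.rpow_natCast, ← Real.rpow_mul hx]
    push_cast
    rw [one_div, inv_mul_cancel₀ (by positivity), Real.rpow_one]
  rw [mul_pow, e2 b hb0.le, e2 t (by positivity)] at h4
  refine h4.trans ?_
  gcongr
  exact le_max_right _ _

lemma Xbound {s : ℕ} (hs : 1 ≤ s) : ∃ K : ℝ, 0 ≤ K ∧
    ∀ (r : ℕ) (𝒜 ℬ : Finset (Finset ℕ)), Val r (s+1) 𝒜 ℬ →
      (𝒜.card : ℝ) ≤ phi s * (ℬ.card:ℝ)^(1+1/(s:ℝ)) + K * ℬ.card := by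
  obtain ⟨M, hM, hcore⟩ := coreM hs (phi_pos s)
  have hφ := phi_pos s
  refine ⟨1 + M, by linarith, ?_⟩
  intro r 𝒜 ℬ
  induction hb : ℬ.card using Nat.strong_induction_on generalizing 𝒜 ℬ with
  | _ b ih =>
  intro h
  by_cases hsm : (𝒜.card : ℝ) ≤ phi s * (b:ℝ)^(1+1/(s:ℝ))
  · have : 0 ≤ (1+M) * (b:ℝ) := by positivity
    linarith
  push Not at hsm
  have hne : 𝒜.Nonempty := by
    rw [← Finset.card_pos]
    have : (0:ℝ) < 𝒜.card := lt_of_le_of_lt (by positivity) hsm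
    exact_mod_cast this
  obtain ⟨S, hS, ht, hbt⟩ := hcore r 𝒜 ℬ h hne (by rw [hb]; exact hsm.le)
  obtain ⟨𝒜₀, hs0, hsh, hcard⟩ := peel h S hS
  set t := (ℬ.filter (fun B => S ⊆ B)).card
  have hsum : t + (ℬ.filter (fun B => ¬ S ⊆ B)).card = b := by
    rw [← hb]; exact Finset.card_filter_add_card_filter_not _
  have i1 := ih _ (by omega) _ _ rfl (h.ofNotSub S)
  have k1 := KKup hs 𝒜₀ hs0 t hsh
  set b' := (ℬ.filter (fun B => ¬ S ⊆ B)).card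
  have hcR : (𝒜.card : ℝ) ≤ 𝒜₀.card + b' + (𝒜.filter (fun A => ¬ S ⊆ A)).card := by
    exact_mod_cast hcard
  have hsR : (b:ℝ) = t + b' := by exact_mod_cast hsum.symm
  have hcv := conv_ineq (g := 1/(s:ℝ)) (x := t) (y := b') (by positivity) (by positivity) (by positivity)
  have hd := two_rpow_lt (g := 1/(s:ℝ)) (by positivity)
  have hnn : 0 ≤ (1 - (2:ℝ)^(-(1/(s:ℝ)))) * (min (t:ℝ) b' * ((t:ℝ)+b')^(1/(s:ℝ))) := by positivity
  rw [hb] at hbt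
  rw [hsR] at hbt ⊢
  have hh := mul_le_mul_of_nonneg_left (show (t:ℝ)^(1+1/(s:ℝ)) + (b':ℝ)^(1+1/(s:ℝ)) ≤ ((t:ℝ)+b')^(1+1/(s:ℝ)) by linarith) hφ.le
  nlinarith

lemma cascade_lt (c : ℕ → ℕ) (s : ℕ) (hs : 1 ≤ s) (hc : StrictMonoOn c (Set.Icc 1 s)) (h1 : 2 ≤ c 1) :
    ∑ i ∈ Finset.Icc 1 s, (c i).choose i < (c s + 1).choose s := by
  induction s, hs using Nat.le_induction with
  | base => simp
  | succ s hs ih =>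
    have := ih (hc.mono (Set.Icc_subset_Icc_right (by omega)))
    rw [Finset.sum_Icc_succ_top (by omega), Nat.choose_succ_succ]
    have hlt : c s < c (s+1) := hc ⟨hs, by omega⟩ ⟨by omega, le_rfl⟩ (by omega)
    have : (c s + 1).choose s ≤ (c (s+1)).choose s := Nat.choose_le_choose s hlt
    rw [Nat.succ_eq_add_one]
    omega

lemma Tlow {s : ℕ} (hs : 1 ≤ s) (c : ℕ → ℕ) (hc : StrictMonoOn c (Set.Icc 1 s)) (h1 : 2 ≤ c 1)
    (b : ℕ) (hb : b = ∑ i ∈ Finset.Icc 1 s, (c i).choose i) :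
    phi s * (b:ℝ)^(1+1/(s:ℝ)) - 2 * b ≤ (∑ i ∈ Finset.Icc 1 s, (c i).choose (i+1) : ℕ) := by
  have hlt := cascade_lt c s hs hc h1
  rw [← hb] at hlt
  have hT : (c s).choose (s+1) ≤ ∑ i ∈ Finset.Icc 1 s, (c i).choose (i+1) :=
    Finset.single_le_sum (f := fun i => (c i).choose (i+1)) (fun _ _ => Nat.zero_le _)
      (Finset.mem_Icc.2 ⟨hs, le_rfl⟩)
  have hcb : (c s).choose s ≤ b := by
    rw [hb]
    exact Finset.single_le_sum (f := fun i => (c i).choose i) (fun _ _ => Nat.zero_le _)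
      (Finset.mem_Icc.2 ⟨hs, le_rfl⟩)
  set m := c s
  have hms : s ≤ m + 1 := by
    by_contra hcon
    rw [Nat.choose_eq_zero_of_lt (by omega)] at hlt
    omega
  have h2 : (s.factorial : ℝ) * b ≤ ((m+1:ℕ):ℝ)^s := by
    have : (s.factorial) * (m+1).choose s ≤ (m+1)^s := by
      rw [← Nat.descFactorial_eq_factorial_mul_choose]; exact Nat.descFactorial_le_pow _ _
    have h3 : s.factorial * b ≤ (m+1)^s := le_trans (by gcongr) this
    exact_mod_cast h3
  have h3 := le_root hs (by positivity) h2 (by positivity)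
  have h4 := Nat.choose_succ_right_eq (m+1) s
  have h5 : (((m+1).choose (s+1) : ℕ):ℝ) * (s+1) = ((m+1).choose s : ℕ) * ((m+1:ℕ) - (s:ℝ)) := by
    rw [← Nat.cast_sub hms]
    exact_mod_cast h4
  rw [Nat.choose_succ_succ] at h5
  have h6 : (b:ℝ) ≤ ((m+1).choose s : ℕ) := by exact_mod_cast hlt.le
  have h7 : ((m.choose s : ℕ):ℝ) ≤ b := by exact_mod_cast hcb
  have h8 : ((m.choose (s+1) : ℕ):ℝ) ≤ (∑ i ∈ Finset.Icc 1 s, (c i).choose (i+1) : ℕ) := by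
    exact_mod_cast hT
  refine le_trans ?_ h8
  rw [one_add_rpow (by positivity) (by positivity)]
  have hm0 : (0:ℝ) ≤ (m+1:ℕ) - (s:ℝ) := by
    rw [← Nat.cast_sub hms]; positivity
  have h9 : (b:ℝ) * ((m+1:ℕ) - (s:ℝ)) ≤ ((m+1).choose s : ℕ) * ((m+1:ℕ) - (s:ℝ)) := by gcongr
  have h10 := mul_le_mul_of_nonneg_left h3 (show (0:ℝ) ≤ b by positivity)
  push_cast at h5 h9 h10 ⊢
  have hs1 : (0:ℝ) < s + 1 := by positivity
  have h11 : (0:ℝ) ≤ b := by positivity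
  have : (s+1) * (phi s * (b * (b:ℝ)^(1/(s:ℝ))) - 2 * b) ≤ (s+1) * (m.choose (s+1) : ℕ) := by
    nlinarith
  exact le_of_mul_le_mul_left this hs1


lemma num5 {q : ℕ} (hq : 1 ≤ q) {D δ : ℝ} (hD : 0 < D) (hδ : 0 < δ) (hδ1 : δ ≤ 1) :
    ∃ N : ℕ, ∀ b : ℕ, N < b → ∃ j : ℕ, q + 2 ≤ j ∧ j.choose q ≤ b ∧
      D * (b:ℝ)^(1+1/((q+1:ℕ):ℝ)) ≤ (j.choose (q+1) : ℕ) ∧ (j:ℝ) ≤ δ * (b:ℝ)^(1/(q:ℝ)) := by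
  have hfac : (0:ℝ) < (q+1).factorial := by exact_mod_cast (q+1).factorial_pos
  set E : ℝ := D * (q+1).factorial * (2/δ)^(q+1) with hE
  have hE0 : 0 < E := by positivity
  set Y : ℝ := max (E^(q+1)) (2*(q+3)/δ) with hY
  have hY0 : 0 ≤ Y := le_max_of_le_left (by positivity)
  refine ⟨⌈Y^q⌉₊, fun b hb => ?_⟩
  have hb' : Y^q ≤ (b:ℝ) := (Nat.le_ceil _).trans (by exact_mod_cast hb.le)
  have hb0 : (0:ℝ) < b := by exact_mod_cast (by omega)
  set y : ℝ := (b:ℝ)^(1/(q:ℝ)) with hy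
  have hy0 : 0 < y := by positivity
  have hyq : y^q = b := by rw [hy, one_div]; exact Real.rpow_inv_natCast_pow hb0.le (by omega)
  have hYy : Y ≤ y := by
    rw [← hyq] at hb'
    exact le_of_pow_le_pow_left₀ (by omega) hy0.le hb'
  have hy1 : E^(q+1) ≤ y := (le_max_left _ _).trans hYy
  have hy2 : (q+3 : ℝ) ≤ δ*y/2 := by
    have : 2*(q+3)/δ ≤ y := (le_max_right _ _).trans hYy
    rw [div_le_iff₀ hδ] at this
    linarith
  set j := ⌊δ * y⌋₊ with hj
  have hj1 : (j:ℝ) ≤ δ * y := Nat.floor_le (by positivity)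
  have hj2 : δ * y < j + 1 := Nat.lt_floor_add_one _
  have hjq : q + 2 ≤ j := by
    have : (q + 2 : ℝ) ≤ j := by linarith
    exact_mod_cast this
  refine ⟨j, hjq, ?_, ?_, hj1⟩
  · have h1 : j.choose q ≤ j^q := Nat.choose_le_pow j q
    have h2 : (j:ℝ)^q ≤ b := by
      rw [← hyq]
      apply pow_le_pow_left₀ (by positivity)
      nlinarith
    have h3 : j^q ≤ b := by exact_mod_cast h2
    omega
  · have h3 : (((j + 1 - (q+1) : ℕ) : ℝ) ^ (q+1)) ≤ ((q+1).factorial : ℝ) * (j.choose (q+1) : ℕ) := by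
      exact_mod_cast (Nat.pow_sub_le_descFactorial j (q+1)).trans
        (Nat.descFactorial_eq_factorial_mul_choose j (q+1)).le
    have h4 : δ*y/2 ≤ ((j + 1 - (q+1) : ℕ) : ℝ) := by
      rw [Nat.cast_sub (by omega)]; push_cast; linarith
    have h5 := (pow_le_pow_left₀ (by positivity) h4 (q+1)).trans h3
    set u : ℝ := y^(1/((q+1:ℕ):ℝ)) with hu
    have hu0 : 0 < u := by positivity
    have huE : E ≤ u := by
      refine le_of_pow_le_pow_left₀ (n := q+1) (by omega) hu0.le ?_
      rw [hu, one_div, Real.rpow_inv_natCast_pow hy0.le (by omega)]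
      exact hy1
    have huy : (b:ℝ)^(1/((q+1:ℕ):ℝ)) * u = y := by
      rw [hu, ← hyq, ← Real.rpow_natCast, ← Real.rpow_mul hy0.le, ← Real.rpow_add hy0]
      conv_rhs => rw [← Real.rpow_one y]
      congr 1
      push_cast
      field_simp
    have h6 : D * (b:ℝ)^(1+1/((q+1:ℕ):ℝ)) * E ≤ D * y^(q+1) := by
      rw [one_add_rpow hb0.le (by positivity), pow_succ, hyq]
      have : (b:ℝ)^(1/((q+1:ℕ):ℝ)) * E ≤ y := by
        rw [← huy]; gcongr
      calc _ = D * (b * ((b:ℝ)^(1/((q+1:ℕ):ℝ)) * E)) := by ring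
        _ ≤ _ := by gcongr
    have h7 : (δ*y/2)^(q+1) * (2/δ)^(q+1) = y^(q+1) := by
      rw [← mul_pow]; congr 1; field_simp
    have h8 : D * y^(q+1) ≤ E * (j.choose (q+1) : ℕ) := by
      rw [← h7, hE]
      calc _ = D * (2/δ)^(q+1) * (δ*y/2)^(q+1) := by ring
        _ ≤ D * (2/δ)^(q+1) * (((q+1).factorial : ℝ) * (j.choose (q+1) : ℕ)) := by gcongr
        _ = _ := by ring
    refine le_of_mul_le_mul_left ?_ hE0
    linarith

set_option maxHeartbeats 1600000 in
lemma upper2 {q : ℕ} (hq : 1 ≤ q) : ∃ μ : ℕ, ∀ (r : ℕ) (c : ℕ → ℕ),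
    StrictMonoOn c (Set.Icc 1 (q+1)) → μ < c 1 → ∀ (𝒜 ℬ : Finset (Finset ℕ)),
    Val r (q+2) 𝒜 ℬ → ℬ.card = ∑ i ∈ Finset.Icc 1 (q+1), (c i).choose i →
    𝒜.card ≤ ∑ i ∈ Finset.Icc 1 (q+1), (c i).choose (i+1) := by
  have hs : 1 ≤ q + 1 := by omega
  have hφ := phi_pos (q+1)
  set φ := phi (q+1) with hφd
  obtain ⟨M, hM, hcore⟩ := coreM hs (half_pos hφ)
  obtain ⟨K, hK, hX⟩ := Xbound hs
  rw [← hφd] at hX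
  set h : ℝ := 1/((q+1:ℕ):ℝ) with hh
  have hh0 : 0 < h := by positivity
  have hd := two_rpow_lt hh0
  set d := 1 - (2:ℝ)^(-h)
  set K4 : ℝ := max 1 ((3+K)/(φ*d)) with hK4
  have hK41 : 1 ≤ K4 := le_max_left _ _
  have hK42 : 3 + K ≤ K4 * (φ * d) := by
    rw [← div_le_iff₀ (by positivity)]; exact le_max_right _ _
  set D : ℝ := 1 + φ + K with hD
  have hD0 : 0 < D := by positivity
  set w : ℝ := min 1 (φ/4) with hw
  have hw0 : 0 < w := lt_min one_pos (by positivity)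
  have hw1 : w ≤ 1 := min_le_left _ _
  have hw2 : w ≤ φ/4 := min_le_right _ _
  obtain ⟨N, hN⟩ := num5 hq hD0 (δ := w/K4) (by positivity)
    (by rw [div_le_one (by positivity)]; linarith)
  set Z : ℝ := 4/φ + (K4*M + 1) + (2+D*K4)*2/φ with hZ
  have hZ0 : 0 < Z := by positivity
  set μ : ℕ := ⌈Z^(q+1)⌉₊ + ⌈D * (N:ℝ)^(1+h)⌉₊ + 3 with hμ
  refine ⟨μ, fun r c hc hμc 𝒜 ℬ hV hb => ?_⟩
  have hc1 : 2 ≤ c 1 := by omega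
  by_contra hcon
  push Not at hcon
  set b := ℬ.card with hbdef
  have hcb : c 1 ≤ b := by
    rw [hb]
    have := Finset.single_le_sum (f := fun i => (c i).choose i) (fun _ _ => Nat.zero_le _)
      (Finset.mem_Icc.2 ⟨le_rfl, hs⟩ : 1 ∈ Finset.Icc 1 (q+1))
    simpa using this
  have hb0 : (0:ℝ) < b := by exact_mod_cast (by omega)
  set z : ℝ := (b:ℝ)^h with hz
  have hz0 : 0 < z := by positivity
  have hzb : z^(q+1) = b := by rw [hz, hh, one_div]; exact Real.rpow_inv_natCast_pow hb0.le (by omega)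
  have hZz : Z ≤ z := by
    refine le_of_pow_le_pow_left₀ (n := q+1) (by omega) hz0.le ?_
    rw [hzb]
    refine (Nat.le_ceil _).trans ?_
    exact_mod_cast (by omega)
  have hz1 : 4 ≤ φ * z := by
    have : 4/φ ≤ z := le_trans (by rw [hZ]; have : 0 ≤ (2+D*K4)*2/φ := by positivity
                                   nlinarith) hZz
    rw [div_le_iff₀ hφ] at this; linarith
  have hz2 : K4*M < z := by
    refine lt_of_lt_of_le ?_ hZz
    have : 0 ≤ (2+D*K4)*2/φ := by positivity
    have : 0 < 4/φ := by positivity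
    linarith
  have hz3 : (2+D*K4)*2 ≤ φ * z := by
    have : (2+D*K4)*2/φ ≤ z := le_trans (by
      have : 0 < 4/φ := by positivity
      have : 0 < K4*M := by positivity
      linarith) hZz
    rw [div_le_iff₀ hφ] at this; linarith
  have hbz : (b:ℝ)^(1+h) = b * z := one_add_rpow hb0.le hh0
  have hT := Tlow hs c hc hc1 b hb
  rw [← hh, ← hφd, hbz] at hT
  set T := ∑ i ∈ Finset.Icc 1 (q+1), (c i).choose (i+1) with hTdef
  have hTA : (T:ℝ) ≤ 𝒜.card := by exact_mod_cast hcon.le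
  have hne : 𝒜.Nonempty := Finset.card_pos.1 (by omega)
  obtain ⟨S, hS, ht, hbt⟩ := hcore r 𝒜 ℬ hV hne (by
    rw [← hbdef, hbz]
    refine le_trans ?_ (hT.trans hTA)
    nlinarith)
  obtain ⟨𝒜₀, hA0, hsh, hcard⟩ := peel hV S hS
  have x1 := hX r _ _ (hV.ofNotSub S)
  have k1 := KKup hs 𝒜₀ hA0 _ hsh
  have hsum : (ℬ.filter (fun B => S ⊆ B)).card + (ℬ.filter (fun B => ¬ S ⊆ B)).card = b :=
    Finset.card_filter_add_card_filter_not _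
  set t := (ℬ.filter (fun B => S ⊆ B)).card
  set b' := (ℬ.filter (fun B => ¬ S ⊆ B)).card
  rw [← hh, ← hφd] at k1
  rw [← hbdef] at hbt
  have hcR : (𝒜.card : ℝ) ≤ 𝒜₀.card + b' + (𝒜.filter (fun A => ¬ S ⊆ A)).card := by
    exact_mod_cast hcard
  have hsR : (t:ℝ) + b' = b := by exact_mod_cast hsum
  have hcv := conv_ineq (g := h) (x := t) (y := b') hh0 (by positivity) (by positivity)
  rw [hsR, hbz] at hcv
  have hmin : min (t:ℝ) b' * z ≤ K4 * b := by
    have hcv' := mul_le_mul_of_nonneg_left hcv hφ.le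
    have hKb : K * b' ≤ K * b := by gcongr; omega
    have a1 : φ * d * (min (t:ℝ) b' * z) ≤ (3+K) * b := by
      have : 0 ≤ (t:ℝ) := by positivity
      linarith
    have a2 : (3+K) * b ≤ φ * d * (K4 * b) := by nlinarith
    exact le_of_mul_le_mul_left (a1.trans a2) (by positivity)
  have htb' : (b':ℝ) < t := by
    by_contra hle
    push Not at hle
    rw [min_eq_left hle] at hmin
    have ht0 : (0:ℝ) < t := by exact_mod_cast ht
    have : (t:ℝ) * z ≤ t * (K4 * M) := by
      refine hmin.trans ?_
      have : K4 * b ≤ K4 * (M * t) := by gcongr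
      linarith
    exact absurd (le_of_mul_le_mul_left this ht0) (not_le.2 hz2)
  rw [min_eq_right htb'.le] at hmin
  rcases Nat.eq_zero_or_pos b' with h0 | hpos
  · rw [h0] at x1 hcR
    rw [Nat.cast_zero, Real.zero_rpow (by positivity)] at x1
    have : (𝒜.card : ℝ) ≤ 𝒜₀.card := by push_cast at hcR; linarith
    have h1 : 𝒜.card ≤ 𝒜₀.card := by exact_mod_cast this
    have := kk_cascade c (q+1) hc hc1 𝒜₀ hA0 (by omega)
    omega
  have hb'1 : (1:ℝ) ≤ b' := by exact_mod_cast hpos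
  have hpow1 : (b':ℝ) ≤ (b':ℝ)^(1+h) := by
    rw [one_add_rpow (by positivity) hh0]
    exact le_mul_of_one_le_right (by positivity) (Real.one_le_rpow hb'1 hh0.le)
  have hAA : (𝒜.card : ℝ) ≤ 𝒜₀.card + D * (b':ℝ)^(1+h) := by
    have : K * b' ≤ K * (b':ℝ)^(1+h) := by gcongr
    rw [hD]; linarith
  by_cases hbN : b' ≤ N
  · set c' := Function.update c 1 (c 1 - 1) with hc'
    have hc'1 : c' 1 = c 1 - 1 := by simp [hc']
    have hc'n : ∀ i, i ≠ 1 → c' i = c i := fun i hi => by simp [hc', hi]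
    have hmono : StrictMonoOn c' (Set.Icc 1 (q+1)) := by
      intro i hi j hj hij
      have hlt := hc hi hj hij
      have hj1 : j ≠ 1 := by have := hi.1; omega
      rw [hc'n j hj1]
      by_cases hi1 : i = 1
      · subst hi1; rw [hc'1]; omega
      · rw [hc'n i hi1]; exact hlt
    have hdec : ∀ F : ℕ → ℕ → ℕ, ∑ i ∈ Finset.Icc 1 (q+1), F (c' i) i + F (c 1) 1 =
        ∑ i ∈ Finset.Icc 1 (q+1), F (c i) i + F (c 1 - 1) 1 := by
      intro F
      have hm : 1 ∈ Finset.Icc 1 (q+1) := Finset.mem_Icc.2 ⟨le_rfl, hs⟩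
      rw [← Finset.add_sum_erase _ _ hm, ← Finset.add_sum_erase _ (fun i => F (c i) i) hm, hc'1]
      have : ∑ i ∈ (Finset.Icc 1 (q+1)).erase 1, F (c' i) i =
          ∑ i ∈ (Finset.Icc 1 (q+1)).erase 1, F (c i) i := by
        apply Finset.sum_congr rfl
        intro i hi
        rw [hc'n i (Finset.ne_of_mem_erase hi)]
      rw [this]; ring
    have d1 := hdec (fun a i => a.choose i)
    have d2 := hdec (fun a i => a.choose (i+1))
    simp only [Nat.choose_one_right] at d1
    have hp : (c 1).choose 2 = (c 1 - 1) + (c 1 - 1).choose 2 := by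
      obtain ⟨e, he⟩ : ∃ e, c 1 = e + 1 := ⟨c 1 - 1, by omega⟩
      rw [he, Nat.choose_succ_succ, Nat.choose_one_right]; rfl
    have := kk_cascade c' (q+1) hmono (by omega) 𝒜₀ hA0 (by omega)
    have hsmall : D * (b':ℝ)^(1+h) ≤ (⌈D * (N:ℝ)^(1+h)⌉₊ : ℕ) := by
      refine le_trans ?_ (Nat.le_ceil _)
      gcongr
    have h3 : 𝒜.card ≤ 𝒜₀.card + ⌈D * (N:ℝ)^(1+h)⌉₊ := by
      have : (𝒜.card : ℝ) ≤ 𝒜₀.card + (⌈D * (N:ℝ)^(1+h)⌉₊ : ℕ) := by linarith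
      exact_mod_cast this
    simp only [show 1 + 1 = 2 from rfl] at d2
    omega
  · push Not at hbN
    obtain ⟨j, hj1, hj2, hj3, hj4⟩ := hN b' hbN
    have hbz' : (b':ℝ)^h ≤ z := Real.rpow_le_rpow (by positivity) (by linarith) hh0.le
    have hb'K : (b':ℝ)^(1+h) ≤ K4 * b := by
      rw [one_add_rpow (by positivity) hh0]
      refine le_trans ?_ hmin
      gcongr
    have hA0low : φ/4 * (b * z) ≤ 𝒜₀.card := by
      have e1 : D * (b':ℝ)^(1+h) ≤ D * (K4 * b) := by gcongr
      nlinarith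
    set y : ℝ := (b':ℝ)^(1/(q:ℝ)) with hy
    have hyq : y^q = b' := by
      rw [hy, one_div]; exact Real.rpow_inv_natCast_pow (by positivity) (by omega)
    have hyz : y ≤ K4 * z := by
      refine le_of_pow_le_pow_left₀ (n := q) (by omega) (by positivity) ?_
      rw [hyq, mul_pow]
      have e1 : (b':ℝ) * z ≤ K4 * z^q * z := by
        rw [mul_assoc, ← pow_succ, hzb]; exact hmin
      have e2 := le_of_mul_le_mul_right e1 hz0
      refine e2.trans ?_
      gcongr
      exact le_self_pow₀ hK41 (by omega)
    have hjz : (j:ℝ) ≤ w * z := by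
      calc (j:ℝ) ≤ w/K4 * y := hj4
        _ ≤ w/K4 * (K4 * z) := by gcongr
        _ = w * z := by field_simp
    have hjA : j.choose (q+2) ≤ 𝒜₀.card := by
      have e1 : ((j.choose (q+2) : ℕ):ℝ) ≤ (j:ℝ)^(q+2) := by exact_mod_cast Nat.choose_le_pow j (q+2)
      have e2 : (j:ℝ)^(q+2) ≤ (w*z)^(q+2) := pow_le_pow_left₀ (by positivity) hjz _
      have e3 : (w*z)^(q+2) = w^(q+2) * (b * z) := by
        rw [mul_pow, ← hzb]; ring
      have e4 : w^(q+2) ≤ w := pow_le_of_le_one hw0.le hw1 (by omega)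
      have e5 : w^(q+2) * (b * z) ≤ φ/4 * (b*z) := by
        have := e4.trans hw2
        gcongr
      have : ((j.choose (q+2) : ℕ):ℝ) ≤ 𝒜₀.card := by linarith
      exact_mod_cast this
    have hcone := cone c q hc hc1 𝒜₀ hA0 j hj1 hjA (by omega)
    have : (𝒜.card : ℝ) ≤ 𝒜₀.card + (j.choose (q+1) : ℕ) := by linarith
    have : 𝒜.card ≤ 𝒜₀.card + j.choose (q+1) := by exact_mod_cast this
    omega

lemma upper1 (r : ℕ) (𝒜 ℬ : Finset (Finset ℕ)) (h : Val r 2 𝒜 ℬ) :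
    𝒜.card ≤ ℬ.card.choose 2 := by
  classical
  rw [← Finset.card_powersetCard]
  refine le_trans (Finset.card_le_card (t := (Finset.powersetCard 2 ℬ).image (fun P => P.sup id)) ?_)
    Finset.card_image_le
  intro A hA
  obtain ⟨x, hx, y, hy, hxy⟩ := Finset.one_lt_card.1 (h.2.2 A hA)
  rw [Finset.mem_filter] at hx hy
  have hne : A.erase x ≠ A.erase y := by
    intro he
    apply Finset.notMem_erase x A
    rw [he]
    exact Finset.mem_erase.2 ⟨hxy, hx.1⟩
  refine Finset.mem_image.2 ⟨{A.erase x, A.erase y}, Finset.mem_powersetCard.2 ⟨?_, ?_⟩, ?_⟩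
  · intro B hB
    rw [Finset.mem_insert, Finset.mem_singleton] at hB
    rcases hB with rfl | rfl
    exacts [hx.2, hy.2]
  · exact Finset.card_pair hne
  · ext w
    simp only [Finset.sup_insert, Finset.sup_singleton, id, Finset.sup_eq_union, Finset.mem_union,
      Finset.mem_erase]
    constructor
    · rintro (h | h) <;> exact h.2
    · intro hw
      by_cases hwx : w = x
      · right; exact ⟨hwx ▸ hxy, hw⟩
      · left; exact ⟨hwx, hw⟩

lemma upper {s : ℕ} (hs : 1 ≤ s) : ∃ μ : ℕ, ∀ (r : ℕ) (c : ℕ → ℕ),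
    StrictMonoOn c (Set.Icc 1 s) → μ < c 1 → ∀ (𝒜 ℬ : Finset (Finset ℕ)),
    Val r (s+1) 𝒜 ℬ → ℬ.card = ∑ i ∈ Finset.Icc 1 s, (c i).choose i →
    𝒜.card ≤ ∑ i ∈ Finset.Icc 1 s, (c i).choose (i+1) := by
  obtain ⟨q, rfl⟩ : ∃ q, s = q + 1 := ⟨s - 1, by omega⟩
  rcases Nat.eq_zero_or_pos q with rfl | hq
  · refine ⟨0, fun r c _ _ 𝒜 ℬ h hb => ?_⟩
    have := upper1 r 𝒜 ℬ h
    simp at hb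
    simpa [hb] using this
  · exact upper2 hq


lemma lower_aux (c : ℕ → ℕ) (s : ℕ) (hc : StrictMonoOn c (Set.Icc 1 s)) :
    ∃ 𝒜 ℬ : Finset (Finset ℕ), (∀ A ∈ 𝒜, A.card = s + 1) ∧ (∀ B ∈ ℬ, B.card = s) ∧
      (∀ A ∈ 𝒜, ∀ x ∈ A, A.erase x ∈ ℬ) ∧
      ℬ.card = ∑ i ∈ Finset.Icc 1 s, (c i).choose i ∧
      𝒜.card = ∑ i ∈ Finset.Icc 1 s, (c i).choose (i+1) ∧
      (∀ m, (∀ i, 1 ≤ i → i ≤ s → c i < m) →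
        (∀ A ∈ 𝒜, ∀ x ∈ A, x < m) ∧ (∀ B ∈ ℬ, ∀ x ∈ B, x < m)) := by
  classical
  induction s with
  | zero => exact ⟨∅, ∅, by simp⟩
  | succ s ih =>
    obtain ⟨𝒜, ℬ, hA, hB, hAB, hcB, hcA, hm⟩ := ih (hc.mono (Set.Icc_subset_Icc le_rfl (by omega)))
    obtain ⟨hmA, hmB⟩ := hm (c (s+1)) (fun i h1 h2 => hc ⟨h1, by omega⟩ ⟨by omega, le_rfl⟩ (by omega))
    set C := c (s+1) with hC
    have hnA : ∀ A ∈ 𝒜, C ∉ A := fun A h hx => lt_irrefl _ (hmA A h _ hx)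
    have hnB : ∀ A ∈ ℬ, C ∉ A := fun A h hx => lt_irrefl _ (hmB A h _ hx)
    have hcard : ∀ (n : ℕ) (ℱ : Finset (Finset ℕ)), (∀ A ∈ ℱ, C ∉ A) →
        (Finset.powersetCard n (Finset.range C) ∪ ℱ.image (insert C)).card
          = C.choose n + ℱ.card := by
      intro n ℱ hF
      rw [Finset.card_union_of_disjoint, Finset.card_powersetCard, Finset.card_range,
        Finset.card_image_of_injOn]
      · intro A hA B hB hAB
        have := congrArg (fun t => Finset.erase t C) hAB
        simpa [Finset.erase_insert (hF A hA), Finset.erase_insert (hF B hB)] using this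
      · rw [Finset.disjoint_left]
        intro A hA hB
        obtain ⟨B, hB, rfl⟩ := Finset.mem_image.1 hB
        have := (Finset.mem_powersetCard.1 hA).1 (Finset.mem_insert_self _ _)
        simp at this
    refine ⟨Finset.powersetCard (s+2) (Finset.range C) ∪ 𝒜.image (insert C),
      Finset.powersetCard (s+1) (Finset.range C) ∪ ℬ.image (insert C), ?_, ?_, ?_, ?_, ?_, ?_⟩
    · intro A h
      rcases Finset.mem_union.1 h with h | h
      · exact (Finset.mem_powersetCard.1 h).2
      · obtain ⟨A0, h0, rfl⟩ := Finset.mem_image.1 h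
        rw [Finset.card_insert_of_notMem (hnA _ h0), hA _ h0]
    · intro A h
      rcases Finset.mem_union.1 h with h | h
      · exact (Finset.mem_powersetCard.1 h).2
      · obtain ⟨A0, h0, rfl⟩ := Finset.mem_image.1 h
        rw [Finset.card_insert_of_notMem (hnB _ h0), hB _ h0]
    · intro A h x hx
      rcases Finset.mem_union.1 h with h | h
      · obtain ⟨h1, h2⟩ := Finset.mem_powersetCard.1 h
        refine Finset.mem_union_left _ (Finset.mem_powersetCard.2 ⟨(Finset.erase_subset _ _).trans h1, ?_⟩)
        rw [Finset.card_erase_of_mem hx, h2]; rfl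
      · obtain ⟨A0, h0, rfl⟩ := Finset.mem_image.1 h
        by_cases hxC : x = C
        · subst hxC
          rw [Finset.erase_insert (hnA _ h0)]
          exact Finset.mem_union_left _ (Finset.mem_powersetCard.2
            ⟨fun y hy => Finset.mem_range.2 (hmA _ h0 y hy), hA _ h0⟩)
        · rw [Finset.erase_insert_of_ne (Ne.symm hxC)]
          exact Finset.mem_union_right _ (Finset.mem_image_of_mem _
            (hAB _ h0 x (Finset.mem_of_mem_insert_of_ne hx hxC)))
    · rw [hcard _ _ hnB, hcB, Finset.sum_Icc_succ_top (by omega)]; ring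
    · rw [hcard _ _ hnA, hcA, Finset.sum_Icc_succ_top (by omega)]; ring
    · intro m hm'
      have hCm : C < m := hm' (s+1) (by omega) le_rfl
      have key : ∀ (n : ℕ) (ℱ : Finset (Finset ℕ)), (∀ A ∈ ℱ, ∀ x ∈ A, x < C) →
          ∀ A ∈ Finset.powersetCard n (Finset.range C) ∪ ℱ.image (insert C), ∀ x ∈ A, x < m := by
        intro n ℱ hF A h x hx
        rcases Finset.mem_union.1 h with h | h
        · have := Finset.mem_range.1 ((Finset.mem_powersetCard.1 h).1 hx)
          omega
        · obtain ⟨A0, h0, rfl⟩ := Finset.mem_image.1 h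
          rcases Finset.mem_insert.1 hx with rfl | hx
          · exact hCm
          · have := hF _ h0 x hx
            omega
      exact ⟨key _ _ hmA, key _ _ hmB⟩

lemma lower (c : ℕ → ℕ) (s n : ℕ) (hc : StrictMonoOn c (Set.Icc 1 s)) :
    ∃ 𝒜 ℬ : Finset (Finset ℕ), ValidPair (s+1+n) (s+1) 𝒜 ℬ ∧
      ℬ.card = ∑ i ∈ Finset.Icc 1 s, (c i).choose i ∧
      𝒜.card = ∑ i ∈ Finset.Icc 1 s, (c i).choose (i+1) := by
  classical
  obtain ⟨𝒜, ℬ, hA, hB, hAB, hcB, hcA, hm⟩ := lower_aux c s hc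
  set m := ∑ i ∈ Finset.Icc 1 s, c i + 1
  obtain ⟨hmA, hmB⟩ := hm m (fun i h1 h2 => Nat.lt_succ_of_le
    (Finset.single_le_sum (f := c) (fun _ _ => Nat.zero_le _) (Finset.mem_Icc.2 ⟨h1, h2⟩)))
  set X := Finset.Ico m (m+n)
  have hX : X.card = n := by simp [X]
  have hdis : ∀ A : Finset ℕ, (∀ x ∈ A, x < m) → Disjoint A X := by
    intro A h
    rw [Finset.disjoint_left]
    intro x hx hxX
    have := (Finset.mem_Ico.1 hxX).1
    have := h x hx
    omega
  have hinj : ∀ A B : Finset ℕ, (∀ x ∈ A, x < m) → (∀ x ∈ B, x < m) → A ∪ X = B ∪ X → A = B := by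
    intro A B h1 h2 h
    have := congrArg (fun t => t \ X) h
    simpa [Finset.union_sdiff_cancel_right (hdis A h1), Finset.union_sdiff_cancel_right (hdis B h2)]
      using this
  refine ⟨𝒜.image (fun A => A ∪ X), ℬ.image (fun A => A ∪ X), ⟨?_, ?_, ?_⟩, ?_, ?_⟩
  · intro A h
    obtain ⟨A0, h0, rfl⟩ := Finset.mem_image.1 h
    rw [Finset.card_union_of_disjoint (hdis _ (hmA _ h0)), hA _ h0, hX]
  · intro A h
    obtain ⟨A0, h0, rfl⟩ := Finset.mem_image.1 h
    rw [Finset.card_union_of_disjoint (hdis _ (hmB _ h0)), hB _ h0, hX]; omega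
  · intro A h
    obtain ⟨A0, h0, rfl⟩ := Finset.mem_image.1 h
    rw [← hA _ h0]
    apply Finset.card_le_card_of_injOn (fun x => A0.erase x ∪ X)
    · intro x hx
      exact Finset.mem_coe.2 (Finset.mem_filter.2 ⟨Finset.mem_image_of_mem _ (hAB _ h0 x hx),
        Finset.union_subset_union_left (Finset.erase_subset _ _)⟩)
    · intro x hx y hy hxy
      have h1 := hinj _ _ (hmB _ (hAB _ h0 x hx)) (hmB _ (hAB _ h0 y hy)) hxy
      by_contra hne
      apply Finset.notMem_erase x A0
      rw [h1]
      exact Finset.mem_erase.2 ⟨hne, hx⟩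
  · rw [Finset.card_image_of_injOn, hcB]
    intro A h1 B h2 h
    exact hinj A B (hmB _ h1) (hmB _ h2) h
  · rw [Finset.card_image_of_injOn, hcA]
    intro A h1 B h2 h
    exact hinj A B (hmA _ h1) (hmA _ h2) h

lemma ValidPair.toVal {r k : ℕ} {𝒜 ℬ : Finset (Finset ℕ)} (h : ValidPair (r+1) k 𝒜 ℬ) :
    Val r k 𝒜 ℬ := by
  classical
  refine ⟨h.1, h.2.1, fun A hA => (h.2.2 A hA).trans ?_⟩
  refine le_trans (Finset.card_le_card
    (t := (A.filter (fun x => A.erase x ∈ ℬ)).image (fun x => A.erase x)) ?_) Finset.card_image_le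
  intro B hB
  rw [Finset.mem_filter] at hB
  have h1 := h.1 A hA
  have h2 := h.2.1 B hB.1
  obtain ⟨a, ha, haB⟩ := Finset.exists_eq_insert_iff.2 ⟨hB.2, by omega⟩
  have he : A.erase a = B := by rw [← haB, Finset.erase_insert ha]
  refine Finset.mem_image.2 ⟨a, Finset.mem_filter.2 ⟨?_, he ▸ hB.1⟩, he⟩
  rw [← haB]; exact Finset.mem_insert_self _ _

theorem stmt_0 :
    ∀ k : ℕ, 2 ≤ k → ∃ μ : ℕ, ∀ r : ℕ, k ≤ r → ∀ c : ℕ → ℕ,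
      StrictMonoOn c (Set.Icc 1 (k - 1)) → μ < c 1 →
      f r k (∑ i ∈ Finset.Icc 1 (k - 1), (c i).choose i) =
        ∑ i ∈ Finset.Icc 1 (k - 1), (c i).choose (i + 1) := by
  intro k hk
  obtain ⟨s, rfl⟩ : ∃ s, k = s + 1 := ⟨k - 1, by omega⟩
  obtain ⟨μ, hμ⟩ := upper (s := s) (by omega)
  refine ⟨μ, fun r hr c hc hc1 => ?_⟩
  rw [Nat.add_sub_cancel] at hc ⊢
  obtain ⟨n, rfl⟩ : ∃ n, r = s + 1 + n := ⟨r - (s+1), by omega⟩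
  have hub : ∀ a ∈ {a : ℕ | ∃ 𝒜 ℬ : Finset (Finset ℕ), ValidPair (s+1+n) (s+1) 𝒜 ℬ ∧
      ℬ.card = ∑ i ∈ Finset.Icc 1 s, (c i).choose i ∧ 𝒜.card = a},
      a ≤ ∑ i ∈ Finset.Icc 1 s, (c i).choose (i+1) := by
    rintro a ⟨𝒜, ℬ, hV, hb, rfl⟩
    rw [show s + 1 + n = (s + n) + 1 by omega] at hV
    exact hμ _ c hc hc1 𝒜 ℬ hV.toVal hb
  obtain ⟨𝒜, ℬ, hV, hb, ha⟩ := lower c s n hc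
  unfold f
  apply le_antisymm
  · exact csSup_le ⟨_, 𝒜, ℬ, hV, hb, rfl⟩ hub
  · exact le_csSup ⟨_, hub⟩ ⟨𝒜, ℬ, hV, hb, ha⟩
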